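/- arXiv:2404.09295 — 2 statements merged into one kernel-verified Lean document; each statement's English description precedes it below -/
import Mathlib

section
/- Fix a positive integer r, a real number c₀ with 0 < c₀ < 1, and a real number η > 0. Then there exists a constant P, depending only on (r, c₀, η), such that: for every prime p ≥ P; for all real numbers M, N ≥ 1 satisfying M⁴·N² ≥ p^{1 + 1/r + η}; and for all sets ℳ, 𝒩 of integers with ℳ ⊆ [M, 2M] ∩ [1, p], 𝒩 ⊆ [N, 2N] ∩ [1, p], #ℳ ≥ c₀·M, and #𝒩 ≥ c₀·N; there exist m ∈ ℳ, n ∈ 𝒩, and a positive integer k with k ≤ p^{1 + 1/r + η}·(M·N)^{−2} + p^η such that m·n + k is a quadratic residue modulo p. -/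
open Finset

/-- An integer `x` is a quadratic residue modulo the prime `p`. -/
def IsQuadRes (p : ℕ) (x : ℤ) : Prop :=
  ¬ ((p : ℤ) ∣ x) ∧ ∃ y : ℤ, y ^ 2 ≡ x [ZMOD (p : ℤ)]

/-!
By Stepanov's method, an auxiliary polynomial vanishing to high order at the points where
`f` takes quadratic residue (or non-residue) values bounds the number of these points, which gives
a Weil-type bound `O(deg f * √p)` for the sums of `χ (f x)` when `f` has a simple root. Hence, for a
set `T` of about `log p` shifts, only `O(√p log p)` residues `y` are such that `χ (y + t)` avoids a
given sign for all `t ∈ T`.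

If no `m * n + b * t` with `b ∈ B` and `t ∈ T` were a quadratic residue, then `χ (m * n / b + t)`
would avoid the sign `χ b` for all `t ∈ T`, so there would be few residues `m * n / b`. On the other
hand, by Cauchy–Schwarz and the divisor bound these residues are numerous: two triples give the same
residue exactly when `m * n * b' ≡ m' * n' * b` modulo `p`, which is a rare event. With
`B = [1, √p * p ^ (4 * δ) / (M * N)]` and `T = [1, log p]` this is a contradiction, and `k = b * t`
has the required size.
-/

section Stepanov

open Polynomial

section CommRing

variable {R : Type*} [CommRing R]

lemma mul_derivative_pow (f : R[X]) (n : ℕ) :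
    f * derivative (f ^ n) = n * f ^ n * derivative f := by
  cases n with
  | zero => simp
  | succ n => rw [derivative_pow_succ]; push_cast; simp only [map_add, map_natCast, map_one]; ring

/-- The linear differential operator `T` of order `k` with `f ^ k * (Q * f ^ e)⁽ᵏ⁾ = f ^ e * T Q`.
It clears the power of `f` from the derivatives of `Q * f ^ e`. -/
noncomputable def twistedDerivative (f : R[X]) (e : ℕ) : ℕ → R[X] →ₗ[R] R[X]
  | 0 => LinearMap.id
  | k + 1 => (LinearMap.mulLeft R f ∘ₗ derivative +
      LinearMap.mulLeft R (((e : R[X]) - k) * derivative f)) ∘ₗ twistedDerivative f e k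

lemma twistedDerivative_succ_apply (f : R[X]) (e k : ℕ) (Q : R[X]) :
    twistedDerivative f e (k + 1) Q = f * derivative (twistedDerivative f e k Q) +
      ((e : R[X]) - k) * derivative f * twistedDerivative f e k Q := rfl

lemma pow_mul_iterate_derivative_mul_pow (f Q : R[X]) (e k : ℕ) :
    f ^ k * derivative^[k] (Q * f ^ e) = f ^ e * twistedDerivative f e k Q := by
  induction k with
  | zero => simp [twistedDerivative, mul_comm]
  | succ k ih =>
    have h := congrArg (f * derivative ·) ih
    simp only [derivative_mul, mul_add, ← mul_assoc, mul_derivative_pow] at h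
    rw [Function.iterate_succ_apply', twistedDerivative_succ_apply]
    linear_combination h - k * derivative f * ih

lemma natDegree_twistedDerivative_le (f Q : R[X]) (e k : ℕ) :
    (twistedDerivative f e k Q).natDegree ≤ Q.natDegree + k * f.natDegree := by
  induction k with
  | zero => simp [twistedDerivative]
  | succ k ih =>
    have hf := natDegree_derivative_le f
    have hT := natDegree_derivative_le (twistedDerivative f e k Q)
    have hcast : ((e : R[X]) - k).natDegree = 0 := by
      simpa using natDegree_C ((e : R) - k)
    rw [twistedDerivative_succ_apply, add_mul, one_mul]
    refine natDegree_add_le_of_degree_le (natDegree_mul_le.trans (by lia)) ?_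
    refine natDegree_mul_le.trans ((Nat.add_le_add_right natDegree_mul_le _).trans (by lia))

/-- The polynomial `∑ j, X ^ (q * j) * P j`, whose base-`X ^ q` digits are the `P j` when these have
degree less than `q`. -/
noncomputable def blockSum (q : ℕ) {J : ℕ} : (Fin J → R[X]) →ₗ[R] R[X] :=
  ∑ j : Fin J, LinearMap.mulLeft R (X ^ (q * (j : ℕ))) ∘ₗ LinearMap.proj j

variable {q h J : ℕ}

lemma blockSum_apply (P : Fin J → R[X]) :
    blockSum q P = ∑ j : Fin J, X ^ (q * (j : ℕ)) * P j := by
  simp [blockSum]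

lemma blockSum_mul_right (P : Fin J → R[X]) (g : R[X]) :
    blockSum q (fun j ↦ P j * g) = blockSum q P * g := by
  simp only [blockSum_apply, sum_mul, mul_assoc]

lemma natDegree_blockSum_le {d : ℕ} (P : Fin J → R[X]) (hP : ∀ j, (P j).natDegree ≤ d) :
    (blockSum q P).natDegree ≤ q * (J - 1) + d := by
  rw [blockSum_apply]
  refine natDegree_sum_le_of_forall_le _ _ fun j _ ↦ natDegree_mul_le.trans ?_
  gcongr
  · exact (natDegree_X_pow_le _).trans (Nat.mul_le_mul_left q (by lia))
  · exact hP j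

lemma iterate_derivative_blockSum (hq : (q : R) = 0) (P : Fin J → R[X]) (k : ℕ) :
    derivative^[k] (blockSum q P) = blockSum q fun j ↦ derivative^[k] (P j) := by
  induction k with
  | zero => rfl
  | succ k ih =>
    rw [Function.iterate_succ_apply', ih]
    simp [Function.iterate_succ_apply', blockSum_apply, derivative_X_pow, hq]

lemma eval_blockSum_of_pow_eq {x : R} (hx : x ^ q = x) (P : Fin J → R[X]) :
    eval x (blockSum q P) = eval x (blockSum 1 P) := by
  simp [blockSum_apply, eval_finsetSum, pow_mul, hx]

lemma coeff_blockSum_mul_add {P : Fin J → R[X]} (hP : ∀ j, (P j).degree < q) (j : Fin J) {i : ℕ}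
    (hi : i < q) : (blockSum q P).coeff (q * j + i) = (P j).coeff i := by
  rw [blockSum_apply, finsetSum_coeff, sum_eq_single j]
  · rw [add_comm, coeff_X_pow_mul]
  · intro b _ hbj
    rw [coeff_X_pow_mul']
    split_ifs with hb
    · refine coeff_eq_zero_of_degree_lt ((hP b).trans_le ?_)
      have hbj' : (b : ℕ) < j := by
        have : (b : ℕ) ≠ j := Fin.val_ne_of_ne hbj
        have : (b : ℕ) < j + 1 := Nat.lt_of_mul_lt_mul_left (a := q) (by lia)
        lia
      have hqb : q * (b + 1) ≤ q * j := Nat.mul_le_mul_left q hbj'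
      rw [mul_add_one] at hqb
      exact_mod_cast Nat.le_sub_of_add_le' (hqb.trans (Nat.le_add_right _ i))
    · rfl
  · simp

lemma eq_zero_of_blockSum_eq_zero {P : Fin J → R[X]} (hP : ∀ j, (P j).degree < q)
    (h0 : blockSum q P = 0) : P = 0 := by
  ext j i
  rcases lt_or_ge i q with hi | hi
  · simp [← coeff_blockSum_mul_add hP j hi, h0]
  · simpa using coeff_eq_zero_of_degree_lt ((hP j).trans_le (by exact_mod_cast hi))

lemma mod_lt_of_coeff_blockSum_ne_zero (hhq : h ≤ q) {P : Fin J → R[X]}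
    (hP : ∀ j, (P j).degree < h) {n : ℕ} (hn : (blockSum q P).coeff n ≠ 0) : n % q < h := by
  rw [blockSum_apply, finsetSum_coeff] at hn
  obtain ⟨j, -, hj⟩ := exists_ne_zero_of_sum_ne_zero hn
  rw [coeff_X_pow_mul'] at hj
  obtain ⟨hjn, hcoeff⟩ := ite_ne_right_iff.1 hj
  have hlt : n - q * j < h := by
    by_contra! hle
    exact hcoeff (coeff_eq_zero_of_degree_lt ((hP j).trans_le (by exact_mod_cast hle)))
  rwa [← Nat.sub_mul_mod hjn, Nat.mod_eq_of_lt (by lia)]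

lemma natTrailingDegree_blockSum_mod_lt {P : Fin J → R[X]} (hhq : h ≤ q)
    (hP : ∀ j, (P j).degree < h) (h0 : blockSum q P ≠ 0) :
    (blockSum q P).natTrailingDegree % q < h :=
  mod_lt_of_coeff_blockSum_ne_zero hhq hP (coeff_natTrailingDegree_ne_zero.2 h0)

variable [IsDomain R]

lemma rootMultiplicity_pow_eq_mul (f : R[X]) (a : R) (n : ℕ) :
    (f ^ n).rootMultiplicity a = n * f.rootMultiplicity a := by
  classical
  rw [← count_roots, ← count_roots, roots_pow, Multiset.count_nsmul]

-- Modulo `q`, the order of vanishing at `0` of the first sum lies in `[0, h)` and that of the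
-- second, multiplied by `f ^ h`, in `[h, 2 * h)`.
lemma eq_zero_of_blockSum_add_blockSum_mul_pow_eq_zero (hhq : 2 * h ≤ q) {f : R[X]}
    (hf : f.rootMultiplicity 0 = 1) {P Q : Fin J → R[X]} (hP : ∀ j, (P j).degree < h)
    (hQ : ∀ j, (Q j).degree < h) (h0 : blockSum q P + blockSum q Q * f ^ h = 0) :
    P = 0 ∧ Q = 0 := by
  have hlt (P : Fin J → R[X]) (hP : ∀ j, (P j).degree < h) (j : Fin J) : (P j).degree < q :=
    (hP j).trans_le (by exact_mod_cast (by lia : h ≤ q))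
  have hB : blockSum q Q = 0 := by
    by_contra hB
    have hf0 : f ≠ 0 := by rintro rfl; simp at hf
    have hA : blockSum q P = -(blockSum q Q * f ^ h) := eq_neg_of_add_eq_zero_left h0
    have hA0 : blockSum q P ≠ 0 := hA ▸ neg_ne_zero.2 (mul_ne_zero hB (pow_ne_zero _ hf0))
    have horder : (blockSum q P).natTrailingDegree = (blockSum q Q).natTrailingDegree + h := by
      rw [hA, natTrailingDegree_neg, natTrailingDegree_mul hB (pow_ne_zero _ hf0),
        ← rootMultiplicity_eq_natTrailingDegree' (p := f ^ h), rootMultiplicity_pow_eq_mul, hf,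
        mul_one]
    have hPmod := natTrailingDegree_blockSum_mod_lt (by lia) hP hA0
    have hQmod := natTrailingDegree_blockSum_mod_lt (by lia) hQ hB
    rw [horder, ← Nat.mod_add_mod, Nat.mod_eq_of_lt (by lia)] at hPmod
    lia
  have hA : blockSum q P = 0 := by simpa [hB] using h0
  exact ⟨eq_zero_of_blockSum_eq_zero (hlt P hP) hA, eq_zero_of_blockSum_eq_zero (hlt Q hQ) hB⟩

lemma mul_card_le_natDegree {G : R[X]} (hG : G ≠ 0) {l : ℕ} {S : Finset R}
    (hS : ∀ x ∈ S, l ≤ G.rootMultiplicity x) : l * #S ≤ G.natDegree := by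
  classical
  calc l * #S = ∑ _ ∈ S, l := by simp [mul_comm]
    _ ≤ ∑ x ∈ S, G.roots.count x := sum_le_sum fun x hx ↦ by simpa using hS x hx
    _ ≤ ∑ x ∈ S ∪ G.roots.toFinset, G.roots.count x :=
      sum_le_sum_of_subset subset_union_left
    _ = G.roots.card := Multiset.sum_count_eq_card fun a ha ↦ by simp_all
    _ ≤ G.natDegree := card_roots' G

end CommRing

section Field

variable {F : Type*} [Field F]

lemma exists_ne_zero_forall_eq_zero_of_mul_lt_finrank {V ι : Type*} [AddCommGroup V] [Module F V]
    [FiniteDimensional F V] [Fintype ι] {E : ℕ} (Φ : ι → V →ₗ[F] F[X])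
    (hΦ : ∀ i v, Φ i v ∈ degreeLT F E) (hE : Fintype.card ι * E < Module.finrank F V) :
    ∃ v ≠ 0, ∀ i, Φ i v = 0 := by
  let Ψ : V →ₗ[F] ι → Fin E → F :=
    LinearMap.pi fun i ↦ (degreeLTEquiv F E).toLinearMap ∘ₗ (Φ i).codRestrict _ (hΦ i)
  obtain ⟨v, hv, hv0⟩ := Submodule.exists_mem_ne_zero_of_ne_bot
    (LinearMap.ker_ne_bot_of_finrank_lt (f := Ψ) (by simpa [Module.finrank_pi_fintype] using hE))
  refine ⟨v, hv0, fun i ↦ ?_⟩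
  have hi : (Φ i).codRestrict _ (hΦ i) v = 0 := by
    simpa [Ψ] using congrFun (LinearMap.mem_ker.1 hv) i
  exact congrArg Subtype.val hi

lemma le_rootMultiplicity_of_isRoot_iterate_derivative (p : ℕ) [CharP F p] {G : F[X]} (hG : G ≠ 0)
    {l : ℕ} (hp : p.Prime) (hl : l ≤ p) {x : F} (hx : ∀ k < l, (derivative^[k] G).IsRoot x) :
    l ≤ G.rootMultiplicity x := by
  cases l with
  | zero => simp
  | succ n =>
    refine lt_rootMultiplicity_of_isRoot_iterate_derivative_of_mem_nonZeroDivisors hG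
      (fun k hk ↦ hx k (by lia)) (mem_nonZeroDivisors_of_ne_zero ?_)
    rw [Ne, CharP.cast_eq_zero_iff F p, hp.dvd_factorial]
    lia

/-- The parameter space of Stepanov's auxiliary polynomials: pairs of families of `J` polynomials
of degree less than `h`. -/
abbrev StepanovData (F : Type*) [Field F] (h J : ℕ) : Type _ :=
  (Fin J → degreeLT F h) × (Fin J → degreeLT F h)

/-- Stepanov's auxiliary polynomial `∑ j, X ^ (q * j) * (P j + Q j * f ^ h)`. -/
noncomputable def stepanovPoly (q : ℕ) (f : F[X]) {h J : ℕ} (v : StepanovData F h J) : F[X] :=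
  blockSum q fun j ↦ v.1 j + v.2 j * f ^ h

/-- A polynomial of low degree that agrees with `f ^ k` times the `k`-th derivative of
`stepanovPoly q f v` at the points `x` such that `x ^ q = x` and `f(x) ^ h = s`. -/
noncomputable def stepanovCondition (f : F[X]) (s : F) (h J k : ℕ) :
    StepanovData F h J →ₗ[F] F[X] :=
  blockSum 1 ∘ₗ LinearMap.pi fun j ↦
    twistedDerivative f 0 k ∘ₗ (degreeLT F h).subtype ∘ₗ LinearMap.proj j ∘ₗ LinearMap.fst F _ _ +
    s • twistedDerivative f h k ∘ₗ (degreeLT F h).subtype ∘ₗ LinearMap.proj j ∘ₗ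
      LinearMap.snd F _ _

variable {q h J : ℕ} {f : F[X]} {s : F}

lemma stepanovCondition_apply (k : ℕ) (v : StepanovData F h J) :
    stepanovCondition f s h J k v =
      blockSum 1 fun j ↦ twistedDerivative f 0 k (v.1 j) + s • twistedDerivative f h k (v.2 j) :=
  rfl

lemma eval_stepanovCondition {x : F} (hq : (q : F) = 0) (hx : x ^ q = x)
    (hs : eval x f ^ h = s) (k : ℕ) (v : StepanovData F h J) :
    eval x (stepanovCondition f s h J k v) =
      eval x f ^ k * eval x (derivative^[k] (stepanovPoly q f v)) := by
  have hterm (j : Fin J) : eval x f ^ k * eval x (derivative^[k] (v.1 j + v.2 j * f ^ h)) =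
      eval x (twistedDerivative f 0 k (v.1 j) + s • twistedDerivative f h k (v.2 j)) := by
    have hP := congrArg (eval x) (pow_mul_iterate_derivative_mul_pow f (v.1 j) 0 k)
    have hQ := congrArg (eval x) (pow_mul_iterate_derivative_mul_pow f (v.2 j) h k)
    simp only [pow_zero, mul_one, one_mul, eval_mul, eval_pow, hs] at hP hQ
    rw [iterate_map_add, eval_add, eval_add, eval_smul, smul_eq_mul, mul_add, hP, hQ]
  rw [stepanovPoly, iterate_derivative_blockSum hq, eval_blockSum_of_pow_eq hx,
    stepanovCondition_apply]
  simp only [blockSum_apply, eval_finsetSum, eval_mul, mul_sum, ← hterm]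
  exact sum_congr rfl fun j _ ↦ by ring

lemma natDegree_le_of_mem_degreeLT {n : ℕ} {P : F[X]} (hP : P ∈ degreeLT F n) :
    P.natDegree ≤ n - 1 := by
  rw [mem_degreeLT] at hP
  exact natDegree_le_pred (natDegree_le_of_degree_le hP.le)
    (coeff_eq_zero_of_degree_lt hP)

lemma stepanovCondition_mem_degreeLT {k l : ℕ} (hh : 0 < h) (hkl : k ≤ l)
    (v : StepanovData F h J) :
    stepanovCondition f s h J k v ∈ degreeLT F (J + h + l * f.natDegree) := by
  have hbound (w : degreeLT F h) (e : ℕ) :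
      (twistedDerivative f e k w).natDegree ≤ h - 1 + l * f.natDegree :=
    (natDegree_twistedDerivative_le f _ e k).trans <|
      Nat.add_le_add (natDegree_le_of_mem_degreeLT w.2) (Nat.mul_le_mul_right _ hkl)
  have hdeg := natDegree_blockSum_le (q := 1)
    (fun j ↦ twistedDerivative f 0 k (v.1 j) + s • twistedDerivative f h k (v.2 j)) fun j ↦
      natDegree_add_le_of_degree_le (hbound (v.1 j) 0)
        ((natDegree_smul_le _ _).trans (hbound (v.2 j) h))
  rw [← stepanovCondition_apply] at hdeg
  exact mem_degreeLT.2 (degree_le_natDegree.trans_lt (by exact_mod_cast (by lia)))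

lemma finrank_stepanovData : Module.finrank F (StepanovData F h J) = 2 * J * h := by
  simp only [Module.finrank_prod, Module.finrank_pi_fintype, (degreeLTEquiv F h).finrank_eq,
    Module.finrank_self, sum_const, card_univ, Fintype.card_fin, smul_eq_mul]
  ring

lemma stepanovPoly_ne_zero (hhq : 2 * h ≤ q) (hf : f.rootMultiplicity 0 = 1)
    {v : StepanovData F h J} (hv : v ≠ 0) : stepanovPoly q f v ≠ 0 := by
  contrapose! hv
  have hsum : stepanovPoly q f v = blockSum q (fun j ↦ (v.1 j : F[X])) +
      blockSum q (fun j ↦ (v.2 j : F[X])) * f ^ h := by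
    rw [← blockSum_mul_right, ← map_add]; rfl
  obtain ⟨hP, hQ⟩ := eq_zero_of_blockSum_add_blockSum_mul_pow_eq_zero hhq hf
    (fun j ↦ mem_degreeLT.1 (v.1 j).2) (fun j ↦ mem_degreeLT.1 (v.2 j).2) (hsum ▸ hv)
  ext j : 3
  · exact congrFun hP j
  · exact congrFun hQ j

lemma natDegree_stepanovPoly_le (hhq : h ≤ q) (hJ : 0 < J) (v : StepanovData F h J) :
    (stepanovPoly q f v).natDegree ≤ q * J + h * f.natDegree := by
  have hdeg (w : degreeLT F h) : (w : F[X]).natDegree ≤ q :=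
    (natDegree_le_of_mem_degreeLT w.2).trans (by lia)
  have hblock (j : Fin J) : (v.1 j + v.2 j * f ^ h : F[X]).natDegree ≤ q + h * f.natDegree :=
    natDegree_add_le_of_degree_le ((hdeg _).trans (by lia)) <|
      natDegree_mul_le.trans (Nat.add_le_add (hdeg _) natDegree_pow_le)
  refine (natDegree_blockSum_le _ hblock).trans_eq ?_
  rw [← add_assoc, ← Nat.mul_succ, Nat.succ_eq_add_one, Nat.sub_add_cancel hJ]

theorem mul_card_le_of_eval_pow_eq [Fintype F] (p : ℕ) [CharP F p] {l : ℕ}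
    (hh : 2 * h ≤ Fintype.card F) (hl : l ≤ p) (hf : f.rootMultiplicity 0 = 1) (hs : s ≠ 0)
    {S : Finset F} (hS : ∀ x ∈ S, eval x f ^ h = s)
    (hcount : l * (J + h + l * f.natDegree) < 2 * J * h) :
    l * #S ≤ Fintype.card F * J + h * f.natDegree := by
  have hh0 : 0 < h := Nat.pos_of_ne_zero (by rintro rfl; simp at hcount)
  have hJ0 : 0 < J := Nat.pos_of_ne_zero (by rintro rfl; simp at hcount)
  have : FiniteDimensional F (degreeLT F h) :=
    LinearEquiv.finiteDimensional (degreeLTEquiv F h).symm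
  obtain ⟨v, hv, hcond⟩ := exists_ne_zero_forall_eq_zero_of_mul_lt_finrank
    (fun k : Fin l ↦ stepanovCondition f s h J k)
    (fun k v ↦ stepanovCondition_mem_degreeLT hh0 k.2.le v)
    (by rwa [Fintype.card_fin, finrank_stepanovData])
  have hG := stepanovPoly_ne_zero hh hf hv
  have hroot : ∀ x ∈ S, ∀ k < l,
      (derivative^[k] (stepanovPoly (Fintype.card F) f v)).IsRoot x := by
    intro x hx k hk
    have hfx : eval x f ≠ 0 := fun h0 ↦ hs (by rw [← hS x hx, h0, zero_pow hh0.ne'])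
    have heval := eval_stepanovCondition (FiniteField.cast_card_eq_zero F) (FiniteField.pow_card x)
      (hS x hx) k v
    rw [hcond ⟨k, hk⟩, eval_zero] at heval
    exact (mul_eq_zero.1 heval.symm).resolve_left (pow_ne_zero _ hfx)
  have hp : p.Prime := CharP.char_is_prime F p
  calc l * #S ≤ (stepanovPoly (Fintype.card F) f v).natDegree :=
        mul_card_le_natDegree hG fun x hx ↦
          le_rootMultiplicity_of_isRoot_iterate_derivative p hG hp hl (hroot x hx)
    _ ≤ Fintype.card F * J + h * f.natDegree := natDegree_stepanovPoly_le (by lia) hJ0 v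

end Field

end Stepanov

section CharacterSums

open Polynomial

variable {p : ℕ} [Fact p.Prime]

lemma exists_stepanov_parameters {h m : ℕ} (hm : 1 ≤ m) (hbig : (12 * m + 7) ^ 2 ≤ 2 * h + 1) :
    ∃ J l : ℕ, l ≤ 2 * h + 1 ∧ l * (J + h + l * m) < 2 * J * h ∧
      ∀ n : ℕ, l * n ≤ (2 * h + 1) * J + h * m →
        (n : ℝ) ≤ (2 * h + 1) / 2 + (13 * m + 7) * √(2 * h + 1) := by
  set J := Nat.sqrt (2 * h + 1)
  have hmJ : 12 * m + 7 ≤ J := Nat.le_sqrt'.2 hbig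
  have hJ : J * J ≤ 2 * h + 1 := Nat.sqrt_le _
  have hh : 1 ≤ h := by nlinarith
  have hJh : J * J ≤ 3 * h := by lia
  obtain ⟨l, hl⟩ : ∃ l, l + (12 * m + 7) = 2 * J := ⟨2 * J - (12 * m + 7), by lia⟩
  refine ⟨J, l, by nlinarith, ?_, fun n hn ↦ ?_⟩
  · calc l * (J + h + l * m) = l * h + l * (J + l * m) := by ring
      _ ≤ l * h + 2 * J * (J + 2 * J * m) := by gcongr <;> lia
      _ = l * h + J * J * (2 + 4 * m) := by ring
      _ ≤ l * h + 3 * h * (2 + 4 * m) := by gcongr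
      _ < (l + (12 * m + 7)) * h := by nlinarith
      _ = 2 * J * h := by rw [hl]
  · have hl' : (l : ℝ) = 2 * J - (12 * m + 7) := by
      rw [eq_sub_iff_add_eq]; exact_mod_cast hl
    have hJl : (J : ℝ) ≤ l := by exact_mod_cast (by lia : J ≤ l)
    have hsqrt : √(2 * h + 1 : ℝ) ≤ J + 1 := by
      exact_mod_cast (Real.sqrt_lt_sqrt (by positivity) (by
        exact_mod_cast Nat.lt_succ_sqrt (2 * h + 1))).le.trans_eq
          (Real.sqrt_mul_self (by positivity : (0 : ℝ) ≤ (J + 1 : ℕ)))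
    have hhalf : (2 * h + 1 : ℝ) / 2 ≤ l * √(2 * h + 1) := by
      nlinarith [Real.mul_self_sqrt (by positivity : (0 : ℝ) ≤ 2 * h + 1),
        Real.sqrt_nonneg (2 * h + 1 : ℝ)]
    refine le_of_mul_le_mul_left ?_ (by linarith : (0 : ℝ) < l)
    calc (l : ℝ) * n ≤ (2 * h + 1) * J + h * m := by exact_mod_cast hn
      _ ≤ (2 * J - (12 * m + 7)) * ((2 * h + 1) / 2) + (13 * m + 7) * ((2 * h + 1) / 2) := by
        nlinarith
      _ ≤ l * ((2 * h + 1) / 2) + (13 * m + 7) * (l * √(2 * h + 1)) := by rw [← hl']; gcongr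
      _ = l * ((2 * h + 1) / 2 + (13 * m + 7) * √(2 * h + 1)) := by ring

lemma one_le_natDegree_of_rootMultiplicity {f : (ZMod p)[X]} {a : ZMod p}
    (hf : f.rootMultiplicity a = 1) : 1 ≤ f.natDegree := by
  rw [← hf, ← count_roots]
  exact (Multiset.count_le_card _ _).trans (card_roots' f)

lemma card_le_of_eval_pow_half_eq (hp : p ≠ 2) {f : (ZMod p)[X]} (hf : f.rootMultiplicity 0 = 1)
    {s : ZMod p} (hs : s ≠ 0) {S : Finset (ZMod p)} (hS : ∀ x ∈ S, eval x f ^ (p / 2) = s) :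
    (#S : ℝ) ≤ p / 2 + 20 * f.natDegree * √p := by
  set m := f.natDegree
  have hm1 : 1 ≤ m := one_le_natDegree_of_rootMultiplicity hf
  have hm1' : (1 : ℝ) ≤ m := by exact_mod_cast hm1
  obtain ⟨h, hh⟩ := (Fact.out : p.Prime).odd_of_ne_two hp
  have hhalf : p / 2 = h := by lia
  have hpR : (p : ℝ) = 2 * h + 1 := by exact_mod_cast hh
  have hweak : (13 * m + 7) * √p ≤ 20 * m * √p := by gcongr; linarith
  rcases le_total ((12 * m + 7) ^ 2) p with hbig | hsmall
  · obtain ⟨J, l, hl, hcount, hbound⟩ := exists_stepanov_parameters hm1 (hh ▸ hbig)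
    have hstep := mul_card_le_of_eval_pow_eq p (h := h) (J := J) (by simp [hh]) (by lia) hf hs
      (hhalf ▸ hS) hcount
    have hcard := hbound #S (by simpa [← hh] using hstep)
    rw [← hpR] at hcard
    linarith
  · have hsqrt : √(p : ℝ) ≤ 12 * m + 7 := by
      rw [Real.sqrt_le_left (by positivity)]; exact_mod_cast hsmall
    have hcard : (#S : ℝ) ≤ p := by
      exact_mod_cast (card_le_univ S).trans_eq (ZMod.card p)
    have hsq := Real.mul_self_sqrt (Nat.cast_nonneg (α := ℝ) p)
    nlinarith [Real.sqrt_nonneg (p : ℝ)]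

lemma card_quadraticChar_eval_eq_le {f : (ZMod p)[X]} (hf : f.rootMultiplicity 0 = 1) (s : ℤˣ) :
    (#{x | quadraticChar (ZMod p) (eval x f) = s} : ℝ) ≤ p / 2 + 20 * f.natDegree * √p := by
  rcases eq_or_ne p 2 with rfl | hp
  · have hcard : (#{x | quadraticChar (ZMod 2) (eval x f) = s} : ℝ) ≤ 2 := by
      exact_mod_cast (card_le_univ _).trans_eq (ZMod.card 2)
    have hm : (1 : ℝ) ≤ f.natDegree := by exact_mod_cast one_le_natDegree_of_rootMultiplicity hf
    have hsqrt : 1 ≤ √((2 : ℕ) : ℝ) := Real.one_le_sqrt.2 (by norm_num)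
    have hmsqrt := one_le_mul_of_one_le_of_one_le hm hsqrt
    simp only [Nat.cast_ofNat] at hmsqrt ⊢
    linarith
  · refine card_le_of_eval_pow_half_eq hp hf (s := ((s : ℤ) : ZMod p)) ?_ fun x hx ↦ ?_
    · rcases Int.units_eq_one_or s with rfl | rfl <;> simp
    · rw [← (mem_filter.1 hx).2,
        quadraticChar_eq_pow_of_char_ne_two' (by rwa [ZMod.ringChar_zmod_n]), ZMod.card]

lemma units_mul_quadraticChar_le (s : ℤˣ) (a : ZMod p) :
    (s : ℤ) * quadraticChar (ZMod p) a ≤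
      2 * (if quadraticChar (ZMod p) a = s then 1 else 0) - 1 + (if a = 0 then 1 else 0) := by
  rcases eq_or_ne a 0 with rfl | ha
  · rcases Int.units_eq_one_or s with rfl | rfl <;> simp
  · rcases Int.units_eq_one_or s with rfl | rfl <;>
      rcases quadraticChar_dichotomy ha with h | h <;> simp [h, ha]

lemma abs_sum_quadraticChar_eval_le_of_rootMultiplicity_zero {f : (ZMod p)[X]}
    (hf : f.rootMultiplicity 0 = 1) :
    |∑ x, (quadraticChar (ZMod p) (eval x f) : ℝ)| ≤ 41 * f.natDegree * √p := by
  have hf0 : f ≠ 0 := by rintro rfl; simp at hf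
  have hzeros : (#{x | eval x f = 0} : ℝ) ≤ f.natDegree * √p := by
    have hcard : #{x | eval x f = 0} ≤ f.natDegree :=
      (card_le_card (t := f.roots.toFinset) fun x hx ↦ by simp_all).trans
        ((Multiset.toFinset_card_le _).trans (card_roots' f))
    have hsqrt : (1 : ℝ) ≤ √p := Real.one_le_sqrt.2 (by exact_mod_cast (Fact.out : p.Prime).one_le)
    nlinarith [(Nat.cast_le (α := ℝ)).2 hcard]
  have hsigned (s : ℤˣ) : ((s : ℤ) : ℝ) * ∑ x, (quadraticChar (ZMod p) (eval x f) : ℝ) ≤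
      41 * f.natDegree * √p := by
    have hsum := sum_le_sum fun x (_ : x ∈ univ) ↦ units_mul_quadraticChar_le s (eval x f)
    rw [← mul_sum, sum_add_distrib, sum_sub_distrib, ← mul_sum, sum_boole, sum_boole,
      sum_const, card_univ, ZMod.card, nsmul_one] at hsum
    have hsum' := (Int.cast_le (R := ℝ)).2 hsum
    push_cast at hsum'
    linarith [card_quadraticChar_eval_eq_le hf s]
  exact abs_le'.2 ⟨by simpa using hsigned 1, by simpa using hsigned (-1)⟩

theorem abs_sum_quadraticChar_eval_le {f : (ZMod p)[X]} {a : ZMod p}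
    (hf : f.rootMultiplicity a = 1) :
    |∑ x, (quadraticChar (ZMod p) (eval x f) : ℝ)| ≤ 41 * f.natDegree * √p := by
  have htaylor : (taylor a f).rootMultiplicity 0 = 1 := by
    rw [rootMultiplicity_eq_natTrailingDegree', taylor_apply,
      ← rootMultiplicity_eq_natTrailingDegree, hf]
  have hsum := abs_sum_quadraticChar_eval_le_of_rootMultiplicity_zero htaylor
  simp only [natDegree_taylor, taylor_eval] at hsum
  rwa [← Equiv.sum_comp (Equiv.addRight a)]

lemma abs_sum_prod_quadraticChar_add_le {A : Finset (ZMod p)} (hA : A.Nonempty) :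
    |∑ x, ∏ t ∈ A, (quadraticChar (ZMod p) (x + t) : ℝ)| ≤ 41 * #A * √p := by
  obtain ⟨a, ha⟩ := hA
  set f : (ZMod p)[X] := ∏ t ∈ A, (X - C (-t)) with hf
  have heval (x : ZMod p) : (quadraticChar (ZMod p) (eval x f) : ℝ) =
      ∏ t ∈ A, (quadraticChar (ZMod p) (x + t) : ℝ) := by
    simp [hf, eval_prod]
  have hsep : f.Separable := (separable_prod_X_sub_C_iff' (f := Neg.neg)).2 fun _ _ _ _ ↦ neg_inj.1
  have hroot : f.IsRoot (-a) := by
    rw [IsRoot, hf, eval_prod]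
    exact prod_eq_zero ha (by simp)
  have hsimple : f.rootMultiplicity (-a) = 1 :=
    le_antisymm (rootMultiplicity_le_one_of_separable hsep _)
      ((rootMultiplicity_pos hsep.ne_zero).2 hroot)
  have hdeg : f.natDegree = #A := natDegree_finsetProd_X_sub_C_eq_card _ _
  simpa only [heval, hdeg] using abs_sum_quadraticChar_eval_le hsimple

lemma card_forall_quadraticChar_eq_mul_two_pow_le_sum (T : Finset (ZMod p)) (s : ℤˣ) :
    (#{y | ∀ t ∈ T, quadraticChar (ZMod p) (y + t) = s} : ℝ) * 2 ^ #T ≤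
      ∑ y : ZMod p, ∏ t ∈ T, (1 + ((s : ℤ) : ℝ) * quadraticChar (ZMod p) (y + t)) := by
  have hnonneg (a : ZMod p) : (0 : ℝ) ≤ 1 + ((s : ℤ) : ℝ) * quadraticChar (ZMod p) a := by
    rcases eq_or_ne a 0 with rfl | ha
    · simp
    · rcases Int.units_eq_one_or s with rfl | rfl <;>
        rcases quadraticChar_dichotomy ha with h | h <;> simp [h]
  rw [← nsmul_eq_mul, ← sum_const]
  refine (sum_congr rfl fun y hy ↦ ?_).trans_le <|
    sum_le_sum_of_subset_of_nonneg (filter_subset _ univ) fun y _ _ ↦ prod_nonneg fun t _ ↦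
      hnonneg (y + t)
  rw [prod_congr rfl fun t ht ↦ by rw [(mem_filter.1 hy).2 t ht], prod_const]
  rcases Int.units_eq_one_or s with rfl | rfl <;> norm_num

lemma card_forall_quadraticChar_eq_le (T : Finset (ZMod p)) (s : ℤˣ) :
    (#{y | ∀ t ∈ T, quadraticChar (ZMod p) (y + t) = s} : ℝ) ≤ p / 2 ^ #T + 41 * #T * √p := by
  have habs : |((s : ℤ) : ℝ)| = 1 := by rcases Int.units_eq_one_or s with rfl | rfl <;> simp
  have hbound (A : Finset (ZMod p)) (hA : A ∈ T.powerset.erase ∅) :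
      ((s : ℤ) : ℝ) ^ #A * ∑ y, ∏ t ∈ A, (quadraticChar (ZMod p) (y + t) : ℝ) ≤
        41 * #T * √p := by
    obtain ⟨hA0, hAT⟩ := mem_erase.1 hA
    refine (le_abs_self _).trans ?_
    rw [abs_mul, abs_pow, habs, one_pow, one_mul]
    refine (abs_sum_prod_quadraticChar_add_le (nonempty_iff_ne_empty.2 hA0)).trans ?_
    gcongr
    exact mem_powerset.1 hAT
  have hexpand : ∑ y : ZMod p, ∏ t ∈ T, (1 + ((s : ℤ) : ℝ) * quadraticChar (ZMod p) (y + t)) ≤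
      p + 2 ^ #T * (41 * #T * √p) :=
    calc _ = ∑ A ∈ T.powerset,
          ((s : ℤ) : ℝ) ^ #A * ∑ y, ∏ t ∈ A, (quadraticChar (ZMod p) (y + t) : ℝ) := by
          simp_rw [prod_one_add, prod_mul_distrib, prod_const, mul_sum]
          exact sum_comm
      _ = p + ∑ A ∈ T.powerset.erase ∅,
          ((s : ℤ) : ℝ) ^ #A * ∑ y, ∏ t ∈ A, (quadraticChar (ZMod p) (y + t) : ℝ) := by
          rw [← add_sum_erase _ _ (empty_mem_powerset T)]
          simp
      _ ≤ p + ∑ _ ∈ T.powerset.erase ∅, 41 * #T * √p := by grw [sum_le_sum hbound]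
      _ ≤ p + ∑ _ ∈ T.powerset, 41 * #T * √p := by
          grw [sum_le_sum_of_subset_of_nonneg (erase_subset ∅ T.powerset) fun _ _ _ ↦ by positivity]
      _ = p + 2 ^ #T * (41 * #T * √p) := by simp
  have hcard := (card_forall_quadraticChar_eq_mul_two_pow_le_sum T s).trans hexpand
  rw [← le_div_iff₀ (by positivity)] at hcard
  exact hcard.trans_eq (by field_simp)

lemma card_forall_quadraticChar_ne_le {T : Finset (ZMod p)} (hT : p ≤ 2 ^ #T) (s : ℤˣ) :
    (#{y | ∀ t ∈ T, quadraticChar (ZMod p) (y + t) ≠ s} : ℝ) ≤ 43 * #T * √p := by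
  have hsub : ({y | ∀ t ∈ T, quadraticChar (ZMod p) (y + t) ≠ s} : Finset (ZMod p)) ⊆
      ({y | ∀ t ∈ T, quadraticChar (ZMod p) (y + t) = (-s : ℤˣ)} : Finset (ZMod p)) ∪
        T.image Neg.neg := by
    intro y hy
    by_cases hzero : -y ∈ T
    · exact mem_union_right _ (mem_image.2 ⟨-y, hzero, neg_neg y⟩)
    refine mem_union_left _ (mem_filter.2 ⟨mem_univ y, fun t ht ↦ ?_⟩)
    have hyt : y + t ≠ 0 := fun h ↦ hzero (by rwa [neg_eq_of_add_eq_zero_right h])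
    have hne := (mem_filter.1 hy).2 t ht
    rcases Int.units_eq_one_or s with rfl | rfl <;>
      rcases quadraticChar_dichotomy hyt with h | h <;> simp_all
  have hcard : (#{y | ∀ t ∈ T, quadraticChar (ZMod p) (y + t) ≠ s} : ℝ) ≤
      #{y | ∀ t ∈ T, quadraticChar (ZMod p) (y + t) = (-s : ℤˣ)} + #T := by
    exact_mod_cast (card_le_card hsub).trans <| (card_union_le _ _).trans <|
      Nat.add_le_add_left card_image_le _
  have hsqrt : (1 : ℝ) ≤ √p := Real.one_le_sqrt.2 (by exact_mod_cast (Fact.out : p.Prime).one_le)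
  have hT1 : (1 : ℝ) ≤ #T := by
    exact_mod_cast Nat.pos_of_ne_zero fun h0 ↦
      (Fact.out : p.Prime).one_lt.not_ge (by simpa [h0] using hT)
  have hdiv : (p : ℝ) / 2 ^ #T ≤ 1 := div_le_one_of_le₀ (by exact_mod_cast hT) (by positivity)
  nlinarith [card_forall_quadraticChar_eq_le T (-s)]

end CharacterSums

section Divisors

lemma add_one_le_mul_rpow_pow {δ x : ℝ} (hδ : 0 < δ) (hx : 2 ≤ x) (a : ℕ) :
    (a + 1 : ℝ) ≤ (1 + 1 / (δ * Real.log 2)) * (x ^ a) ^ δ := by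
  have hlog : 0 < δ * Real.log 2 := mul_pos hδ (Real.log_pos one_lt_two)
  have hexp : ((2 : ℝ) ^ a) ^ δ = Real.exp (a * (δ * Real.log 2)) := by
    rw [Real.rpow_def_of_pos (by positivity), Real.log_pow]
    ring_nf
  calc (a + 1 : ℝ) = 1 + 1 / (δ * Real.log 2) * (a * (δ * Real.log 2)) := by
        rw [add_comm, one_div_mul_eq_div, mul_div_cancel_right₀ _ hlog.ne']
    _ ≤ Real.exp (a * (δ * Real.log 2)) +
          1 / (δ * Real.log 2) * Real.exp (a * (δ * Real.log 2)) := by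
        gcongr
        · exact Real.one_le_exp (by positivity)
        · exact (lt_add_one _).le.trans (Real.add_one_le_exp _)
    _ = (1 + 1 / (δ * Real.log 2)) * ((2 : ℝ) ^ a) ^ δ := by rw [hexp]; ring
    _ ≤ (1 + 1 / (δ * Real.log 2)) * (x ^ a) ^ δ := by gcongr

lemma add_one_le_rpow_pow {δ x : ℝ} (hδ : 0 < δ) (hx : 2 ^ (1 / δ) ≤ x) (a : ℕ) :
    (a + 1 : ℝ) ≤ (x ^ a) ^ δ := by
  have hx0 : 0 < x := lt_of_lt_of_le (by positivity) hx
  have hxδ : 2 ≤ x ^ δ := by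
    rwa [one_div, Real.rpow_inv_le_iff_of_pos zero_le_two hx0.le hδ] at hx
  calc (a + 1 : ℝ) ≤ 2 ^ a := by exact_mod_cast Nat.lt_two_pow_self
    _ ≤ (x ^ δ) ^ a := by gcongr
    _ = (x ^ a) ^ δ := Real.rpow_pow_comm hx0.le δ a

theorem exists_card_divisors_le_mul_rpow {δ : ℝ} (hδ : 0 < δ) :
    ∃ C : ℝ, ∀ n : ℕ, (#n.divisors : ℝ) ≤ C * n ^ δ := by
  obtain ⟨Q, hQ⟩ := exists_nat_ge ((2 : ℝ) ^ (1 / δ))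
  set D : ℝ := 1 + 1 / (δ * Real.log 2)
  have hD : 1 ≤ D := le_add_of_nonneg_right (by positivity)
  refine ⟨D ^ Q, fun n ↦ ?_⟩
  rcases eq_or_ne n 0 with rfl | hn
  · simp only [Nat.divisors_zero, card_empty, Nat.cast_zero]; positivity
  have hfactor (q : ℕ) (hq : q ∈ n.primeFactors) : ((n.factorization q + 1 : ℕ) : ℝ) ≤
      (if q < Q then D else 1) * ((q : ℝ) ^ n.factorization q) ^ δ := by
    push_cast
    split_ifs with h
    · have hq2 := (Nat.prime_of_mem_primeFactors hq).two_le
      exact add_one_le_mul_rpow_pow hδ (by exact_mod_cast hq2) _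
    · rw [one_mul]
      exact add_one_le_rpow_pow hδ (hQ.trans (by exact_mod_cast not_lt.1 h)) _
  have hprod : ∏ q ∈ n.primeFactors, ((q : ℝ) ^ n.factorization q) ^ δ = (n : ℝ) ^ δ := by
    rw [Real.finsetProd_rpow _ _ fun q _ ↦ by positivity]
    congr 1
    exact_mod_cast Nat.prod_factorization_pow_eq_self hn
  calc (#n.divisors : ℝ) = ∏ q ∈ n.primeFactors, ((n.factorization q + 1 : ℕ) : ℝ) := by
        rw [Nat.card_divisors hn, Nat.cast_prod]
    _ ≤ ∏ q ∈ n.primeFactors, (if q < Q then D else 1) * ((q : ℝ) ^ n.factorization q) ^ δ :=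
        prod_le_prod (fun _ _ ↦ by positivity) hfactor
    _ = D ^ #{q ∈ n.primeFactors | q < Q} * n ^ δ := by
        rw [prod_mul_distrib, hprod, ← prod_filter, prod_const]
    _ ≤ D ^ Q * n ^ δ := by
        gcongr
        exact (card_le_card (t := range Q) fun q hq ↦ by simp_all).trans_eq (card_range Q)

end Divisors

section Energy

lemma sq_card_le_card_image_mul_card_collisions {α β : Type*} [DecidableEq β] (T : Finset α)
    (f : α → β) : #T ^ 2 ≤ #(T.image f) * #{u ∈ T ×ˢ T | f u.1 = f u.2} := by
  have hcollisions : #{u ∈ T ×ˢ T | f u.1 = f u.2} = ∑ y ∈ T.image f, #{x ∈ T | f x = y} ^ 2 := by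
    rw [card_eq_sum_card_fiberwise (f := fun u ↦ f u.1) (t := T.image f)
      fun u hu ↦ mem_image_of_mem f (mem_product.1 (mem_filter.1 hu).1).1]
    refine sum_congr rfl fun y _ ↦ ?_
    rw [sq, ← card_product, filter_filter, ← filter_product]
    congr 1
    exact filter_congr fun u _ ↦ ⟨fun h ↦ ⟨h.2, h.1 ▸ h.2⟩, fun h ↦ ⟨h.1.trans h.2.symm, h.1⟩⟩
  rw [hcollisions, card_eq_sum_card_image f T]
  exact sq_sum_le_card_mul_sum_sq

variable {A N B : Finset ℕ} {H D p : ℕ}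

lemma card_filter_mul_mul_eq_le {Z : ℕ} (hZ : Z ≠ 0) (T : Finset (ℕ × ℕ × ℕ)) :
    #{u ∈ T | u.1 * u.2.1 * u.2.2 = Z} ≤ #Z.divisors ^ 2 := by
  rw [sq, ← card_product]
  refine card_le_card_of_injOn (fun u ↦ (u.1, u.2.1)) ?_ ?_
  · rintro ⟨a, n, b⟩ hu
    obtain rfl := (mem_filter.1 hu).2
    exact mem_product.2 ⟨Nat.mem_divisors.2 ⟨⟨n * b, mul_assoc a n b⟩, hZ⟩,
      Nat.mem_divisors.2 ⟨⟨a * b, by dsimp only; ring⟩, hZ⟩⟩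
  · rintro ⟨a, n, b⟩ hu ⟨a', n', b'⟩ hu' h
    obtain ⟨rfl, rfl⟩ := Prod.mk.inj h
    obtain rfl := (mem_filter.1 hu).2
    have hb : a * n * b' = a * n * b := (mem_filter.1 hu').2
    simp [Nat.eq_of_mul_eq_mul_left (Nat.pos_of_ne_zero (left_ne_zero_of_mul hZ)) hb]

lemma card_filter_mod_eq_le (H p a : ℕ) : #{Z ∈ Icc 1 H | Z % p = a} ≤ H / p + 1 := by
  rw [← card_range (H / p + 1)]
  refine card_le_card_of_injOn (· / p) (fun Z hZ ↦ ?_) fun Z hZ Z' hZ' h ↦ ?_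
  · exact mem_range.2 (Nat.lt_succ_of_le
      (Nat.div_le_div_right (mem_Icc.1 (mem_filter.1 hZ).1).2))
  · rw [← Nat.div_add_mod Z p, ← Nat.div_add_mod Z' p, (mem_filter.1 hZ).2, (mem_filter.1 hZ').2]
    exact congrArg (p * · + a) h

lemma card_filter_mul_mul_mod_eq_le {T : Finset (ℕ × ℕ × ℕ)}
    (hT : ∀ u ∈ T, u.1 * u.2.1 * u.2.2 ∈ Icc 1 H)
    (hD : ∀ u ∈ T, #(u.1 * u.2.1 * u.2.2).divisors ≤ D) (a : ℕ) :
    #{u ∈ T | u.1 * u.2.1 * u.2.2 % p = a} ≤ D ^ 2 * (H / p + 1) := by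
  refine (card_le_mul_card_image_of_maps_to (f := fun u : ℕ × ℕ × ℕ ↦ u.1 * u.2.1 * u.2.2)
    (t := {Z ∈ Icc 1 H | Z % p = a}) (fun u hu ↦ ?_) (D ^ 2) fun Z hZ ↦ ?_).trans
      (Nat.mul_le_mul_left _ (card_filter_mod_eq_le H p a))
  · exact mem_filter.2 ⟨hT u (mem_filter.1 hu).1, (mem_filter.1 hu).2⟩
  · rcases eq_empty_or_nonempty {v ∈ {u ∈ T | u.1 * u.2.1 * u.2.2 % p = a} |
      v.1 * v.2.1 * v.2.2 = Z} with hempty | ⟨v, hv⟩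
    · simp [hempty]
    · obtain ⟨hva, rfl⟩ := mem_filter.1 hv
      have hvT := (mem_filter.1 hva).1
      exact (card_filter_mul_mul_eq_le (Nat.one_le_iff_ne_zero.1 (mem_Icc.1 (hT v hvT)).1) _).trans
        (Nat.pow_le_pow_left (hD v hvT) 2)

variable [Fact p.Prime]

/-- The residue of `a * n / b` modulo `p`, as a function of the triple `(a, n, b)`. -/
def quotientResidue (p : ℕ) [Fact p.Prime] (u : ℕ × ℕ × ℕ) : ZMod p :=
  u.1 * u.2.1 / u.2.2

lemma natCast_zmod_ne_zero_of_mem_Ioo {b : ℕ} (hb : b ∈ Ioo 0 p) : (b : ZMod p) ≠ 0 := by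
  rw [Ne, ZMod.natCast_eq_zero_iff]
  exact Nat.not_dvd_of_pos_of_lt (mem_Ioo.1 hb).1 (mem_Ioo.1 hb).2

-- Exchanging `b` and `b'` turns `a n / b = a' n' / b'` into `a n b' = a' n' b`.
lemma card_collisions_quotientResidue_le (hB : B ⊆ Ioo 0 p) :
    #{u ∈ (A ×ˢ N ×ˢ B) ×ˢ (A ×ˢ N ×ˢ B) | quotientResidue p u.1 = quotientResidue p u.2} ≤
      #{u ∈ (A ×ˢ N ×ˢ B) ×ˢ (A ×ˢ N ×ˢ B) |
        u.2.1 * u.2.2.1 * u.2.2.2 % p = u.1.1 * u.1.2.1 * u.1.2.2 % p} := by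
  refine card_le_card_of_injOn
    (fun u ↦ ((u.1.1, u.1.2.1, u.2.2.2), (u.2.1, u.2.2.1, u.1.2.2))) ?_ ?_
  · rintro ⟨⟨a, n, b⟩, a', n', b'⟩ hu
    simp only [coe_filter, mem_product, Set.mem_ofPred_eq] at hu ⊢
    obtain ⟨⟨⟨ha, hn, hb⟩, ha', hn', hb'⟩, h⟩ := hu
    refine ⟨⟨⟨ha, hn, hb'⟩, ha', hn', hb⟩, ?_⟩
    rw [quotientResidue, quotientResidue, div_eq_div_iff (natCast_zmod_ne_zero_of_mem_Ioo (hB hb))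
      (natCast_zmod_ne_zero_of_mem_Ioo (hB hb'))] at h
    rw [← ZMod.natCast_eq_natCast_iff']
    exact_mod_cast h.symm
  · rintro ⟨⟨a, n, b⟩, a', n', b'⟩ - ⟨⟨c, m, d⟩, c', m', d'⟩ - h
    simp only [Prod.mk.injEq] at h ⊢
    tauto

theorem mul_card_le_card_image_quotientResidue (hB : B ⊆ Ioo 0 p)
    (hH : ∀ u ∈ A ×ˢ N ×ˢ B, u.1 * u.2.1 * u.2.2 ∈ Icc 1 H)
    (hD : ∀ u ∈ A ×ˢ N ×ˢ B, #(u.1 * u.2.1 * u.2.2).divisors ≤ D) :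
    #A * #N * #B ≤ #((A ×ˢ N ×ˢ B).image (quotientResidue p)) * (D ^ 2 * (H / p + 1)) := by
  set T := A ×ˢ N ×ˢ B with hT
  have hcongruent : #{u ∈ T ×ˢ T | u.2.1 * u.2.2.1 * u.2.2.2 % p = u.1.1 * u.1.2.1 * u.1.2.2 % p} ≤
      #T * (D ^ 2 * (H / p + 1)) := by
    rw [card_filter, sum_product, ← smul_eq_mul]
    refine sum_le_card_nsmul _ _ _ fun u _ ↦ ?_
    rw [← card_filter]
    exact card_filter_mul_mul_mod_eq_le hH hD (u.1 * u.2.1 * u.2.2 % p)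
  have hcardT : #T = #A * #N * #B := by rw [hT, card_product, card_product, mul_assoc]
  rw [← hcardT]
  rcases (#T).eq_zero_or_pos with h0 | hpos
  · simp [h0]
  refine Nat.le_of_mul_le_mul_left ?_ hpos
  calc #T * #T = #T ^ 2 := (sq _).symm
    _ ≤ #(T.image (quotientResidue p)) * (#T * (D ^ 2 * (H / p + 1))) :=
      (sq_card_le_card_image_mul_card_collisions T (quotientResidue p)).trans <|
        Nat.mul_le_mul_left _ ((card_collisions_quotientResidue_le hB).trans hcongruent)
    _ = _ := by ring

end Energy

section QuadraticResidues

variable {p : ℕ} [Fact p.Prime]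

lemma isQuadRes_iff_quadraticChar_eq_one (x : ℤ) :
    IsQuadRes p x ↔ quadraticChar (ZMod p) x = 1 := by
  rw [IsQuadRes, ← ZMod.intCast_zmod_eq_zero_iff_dvd]
  rcases eq_or_ne (x : ZMod p) 0 with hx | hx
  · simp [hx]
  rw [quadraticChar_one_iff_isSquare hx, isSquare_iff_exists_sq,
    ZMod.intCast_surjective.exists]
  simp [hx, ← ZMod.intCast_eq_intCast_iff, eq_comm]

theorem exists_quadraticChar_mul_add_mul_eq_one {T : Finset (ZMod p)} {A N B : Finset ℕ} {H D : ℕ}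
    (hT : p ≤ 2 ^ #T) (hB : B ⊆ Ioo 0 p) (hH : ∀ u ∈ A ×ˢ N ×ˢ B, u.1 * u.2.1 * u.2.2 ∈ Icc 1 H)
    (hD : ∀ u ∈ A ×ˢ N ×ˢ B, #(u.1 * u.2.1 * u.2.2).divisors ≤ D)
    (hlarge : 86 * #T * √p * (D ^ 2 * (H / p + 1)) < (#A * #N * #B : ℝ)) :
    ∃ a ∈ A, ∃ n ∈ N, ∃ b ∈ B, ∃ t ∈ T, quadraticChar (ZMod p) (a * n + b * t) = 1 := by
  by_contra! hne
  refine hlarge.not_ge ?_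
  have hsub : (A ×ˢ N ×ˢ B).image (quotientResidue p) ⊆
      ({y | ∀ t ∈ T, quadraticChar (ZMod p) (y + t) ≠ (1 : ℤˣ)} : Finset (ZMod p)) ∪
        ({y | ∀ t ∈ T, quadraticChar (ZMod p) (y + t) ≠ (-1 : ℤˣ)} : Finset (ZMod p)) := by
    intro y hy
    obtain ⟨⟨a, n, b⟩, hu, rfl⟩ := mem_image.1 hy
    simp only [mem_product] at hu
    have hb0 := natCast_zmod_ne_zero_of_mem_Ioo (hB hu.2.2)
    have hshift (t : ZMod p) : quadraticChar (ZMod p) (a * n + b * t) =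
        quadraticChar (ZMod p) b * quadraticChar (ZMod p) (quotientResidue p (a, n, b) + t) := by
      rw [← map_mul, quotientResidue]
      congr 1
      field_simp
    have hprod (t : ZMod p) (ht : t ∈ T) := hshift t ▸ hne a hu.1 n hu.2.1 b hu.2.2 t ht
    rcases quadraticChar_dichotomy hb0 with hb | hb
    · exact mem_union_left _ (mem_filter.2 ⟨mem_univ _, fun t ht ↦ by simpa [hb] using hprod t ht⟩)
    · refine mem_union_right _ (mem_filter.2 ⟨mem_univ _, fun t ht h ↦ hprod t ht ?_⟩)
      simp [hb, h]
  have himage : (#((A ×ˢ N ×ˢ B).image (quotientResidue p)) : ℝ) ≤ 86 * #T * √p := by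
    have hcard := (Nat.cast_le (α := ℝ)).2 ((card_le_card hsub).trans (card_union_le _ _))
    rw [Nat.cast_add] at hcard
    linarith [card_forall_quadraticChar_ne_le hT 1, card_forall_quadraticChar_ne_le hT (-1)]
  calc (#A * #N * #B : ℝ)
      ≤ #((A ×ˢ N ×ˢ B).image (quotientResidue p)) * (D ^ 2 * ((H / p : ℕ) + 1)) := by
        exact_mod_cast mul_card_le_card_image_quotientResidue hB hH hD
    _ ≤ 86 * #T * √p * (D ^ 2 * (H / p + 1)) := by gcongr; exact Nat.cast_div_le

end QuadraticResidues

section Parameters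

lemma ceil_sqrt_mul_pow_div_mul_le {x w q : ℝ} (hx : 0 ≤ x) (hw : 0 < w) (hq : 2 ≤ q) :
    ⌈√x * q ^ 4 / w⌉₊ * q ≤ x * q ^ 5 / w ^ 2 + q ^ 5 := by
  set u := √x / w with hu
  have hu2 : u ^ 2 = x / w ^ 2 := by rw [hu, div_pow, Real.sq_sqrt hx]
  have hceil : ⌈√x * q ^ 4 / w⌉₊ ≤ u * q ^ 4 + 1 :=
    (Nat.ceil_lt_add_one (by positivity)).le.trans_eq (by rw [hu]; ring)
  have hq5 : 2 * q ≤ q ^ 5 := by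
    calc 2 * q ≤ q ^ 4 * q := by gcongr; nlinarith [sq_nonneg (q ^ 2 - 1), sq_nonneg (q - 2)]
      _ = q ^ 5 := by ring
  have hq0 : 0 ≤ q := by linarith
  calc ⌈√x * q ^ 4 / w⌉₊ * q ≤ (u * q ^ 4 + 1) * q := by gcongr
    _ = u * q ^ 5 + q := by ring
    _ ≤ u ^ 2 * q ^ 5 + q ^ 5 := by
      nlinarith [mul_nonneg (sq_nonneg (2 * u - 1)) (pow_nonneg hq0 5)]
    _ = x * q ^ 5 / w ^ 2 + q ^ 5 := by rw [hu2]; ring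

lemma mul_sq_mul_div_add_one_lt {κ C q s L D H y : ℝ} (hs : 0 < s) (hq : 0 < q) (hL : L ≤ q)
    (hD0 : 0 ≤ D) (hD : D ≤ C * q) (hH0 : 0 ≤ H) (hH : H ≤ 4 * y) (hqs : q ^ 4 ≤ s)
    (hy : s * q ^ 4 ≤ y) (hκ : 688 * C ^ 2 < κ * q) :
    86 * L * s * (D ^ 2 * (H / s ^ 2 + 1)) < κ * y := by
  have hκ0 : 0 < κ := pos_of_mul_pos_left ((by positivity : 0 ≤ 688 * C ^ 2).trans_lt hκ) hq.le
  have hy0 : 0 < y := lt_of_lt_of_le (by positivity) hy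
  have hH' : H / s ^ 2 * (s * q ^ 4) ≤ 4 * y :=
    calc H / s ^ 2 * (s * q ^ 4) ≤ 4 * y / s ^ 2 * (s * s) := by gcongr
      _ = 4 * y := by field_simp
  calc 86 * L * s * (D ^ 2 * (H / s ^ 2 + 1))
      ≤ 86 * q * s * ((C * q) ^ 2 * (H / s ^ 2 + 1)) := by gcongr
    _ = 688 * C ^ 2 * (s * q ^ 3 * (H / s ^ 2 + 1) / 8) := by ring
    _ < κ * q * (s * q ^ 3 * (H / s ^ 2 + 1) / 8) := by gcongr
    _ = κ * ((H / s ^ 2 * (s * q ^ 4) + s * q ^ 4) / 8) := by ring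
    _ ≤ κ * ((4 * y + y) / 8) := by gcongr
    _ ≤ κ * y := by gcongr; linarith

variable {p : ℕ}

lemma ceil_sqrt_mul_pow_div_lt {w q : ℝ} (hw : 1 ≤ w) (hq : 2 ≤ q) (hqp : q ^ 5 ≤ √p) :
    ⌈√p * q ^ 4 / w⌉₊ < p := by
  have hs : 2 ≤ √(p : ℝ) := hq.trans ((le_self_pow₀ (by linarith) (by norm_num)).trans hqp)
  have hsq := Real.mul_self_sqrt (Nat.cast_nonneg (α := ℝ) p)
  have hdiv : √p * q ^ 4 / w ≤ p / 2 :=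
    calc √p * q ^ 4 / w ≤ √p * q ^ 4 := div_le_self (by positivity) hw
      _ ≤ √p * (√p / 2) := by
        gcongr
        rw [le_div_iff₀ two_pos]
        calc q ^ 4 * 2 ≤ q ^ 4 * q := by gcongr
          _ = q ^ 5 := (pow_succ q 4).symm
          _ ≤ √p := hqp
      _ = p / 2 := by rw [← mul_div_assoc, hsq]
  have hlt : (⌈√p * q ^ 4 / w⌉₊ : ℝ) < p :=
    (Nat.ceil_lt_add_one (by positivity)).trans_le (by nlinarith)
  exact_mod_cast hlt

lemma card_image_natCast_zmod_Icc {L : ℕ} (hL : L < p) :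
    #((Icc 1 L).image (Nat.cast : ℕ → ZMod p)) = L := by
  rw [card_image_of_injOn, Nat.card_Icc, Nat.add_sub_cancel]
  refine (CharP.natCast_injOn_Iio (ZMod p) p).mono fun a ha ↦ ?_
  exact (mem_Icc.1 ha).2.trans_lt hL

lemma mul_mul_mem_Icc_pow_three {a n b : ℕ} (ha : a ∈ Icc 1 p) (hn : n ∈ Icc 1 p)
    (hb : b ∈ Icc 1 p) : a * n * b ∈ Icc 1 (p ^ 3) := by
  rw [mem_Icc] at *
  rw [pow_three']
  exact ⟨Nat.mul_pos (Nat.mul_pos ha.1 hn.1) hb.1,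
    Nat.mul_le_mul (Nat.mul_le_mul ha.2 hn.2) hb.2⟩

variable [Fact p.Prime] {A N : Finset ℕ} {κ C q w : ℝ}

theorem exists_quadraticChar_mul_add_mul_eq_one_of_le_card_mul_card {L b₀ : ℕ}
    (hA : A ⊆ Icc 1 p) (hN : N ⊆ Icc 1 p) (hAN : ∀ a ∈ A, ∀ n ∈ N, (a * n : ℝ) ≤ 4 * w)
    (hcard : κ * w ≤ #A * #N) (hw : 0 ≤ w) (hq : 0 < q) (hqp : q ^ 4 ≤ √p) (hLp : L < p)
    (hpL : p ≤ 2 ^ L) (hLq : L ≤ q) (hb₀ : b₀ < p) (hb₀w : √p * q ^ 4 ≤ w * b₀)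
    (hdiv : ∀ Z ∈ Icc 1 (p ^ 3), (#Z.divisors : ℝ) ≤ C * q) (hκ : 688 * C ^ 2 < κ * q) :
    ∃ a ∈ A, ∃ n ∈ N, ∃ b ∈ Icc 1 b₀, ∃ l ∈ Icc 1 L,
      quadraticChar (ZMod p) (a * n + b * l) = 1 := by
  have hp : 0 < p := (Fact.out : p.Prime).pos
  have hprod (u) (hu : u ∈ A ×ˢ N ×ˢ Icc 1 b₀) : u.1 * u.2.1 * u.2.2 ∈ Icc 1 (p ^ 3) ∧
      (u.1 * u.2.1 * u.2.2 : ℝ) ≤ 4 * (w * b₀) := by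
    simp only [mem_product] at hu
    obtain ⟨ha, hn, hb⟩ := hu
    refine ⟨mul_mul_mem_Icc_pow_three (hA ha) (hN hn) (Icc_subset_Icc_right hb₀.le hb), ?_⟩
    rw [← mul_assoc 4]
    exact mul_le_mul (hAN _ ha _ hn) (by exact_mod_cast (mem_Icc.1 hb).2) (by positivity)
      (by positivity)
  have hCq : 0 ≤ C * q :=
    (Nat.cast_nonneg _).trans (hdiv 1 (mem_Icc.2 ⟨le_rfl, Nat.one_le_pow _ _ hp⟩))
  have hlarge : 86 * L * √p * (⌊C * q⌋₊ ^ 2 * (⌊4 * (w * b₀)⌋₊ / p + 1)) <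
      (#A * #N * b₀ : ℝ) :=
    calc 86 * L * √p * (⌊C * q⌋₊ ^ 2 * (⌊4 * (w * b₀)⌋₊ / p + 1))
        = 86 * L * √p * (⌊C * q⌋₊ ^ 2 * (⌊4 * (w * b₀)⌋₊ / √p ^ 2 + 1)) := by
          rw [Real.sq_sqrt (Nat.cast_nonneg p)]
      _ < κ * (w * b₀) :=
        mul_sq_mul_div_add_one_lt (by positivity) hq hLq (by positivity) (Nat.floor_le hCq)
          (by positivity) (Nat.floor_le (by positivity)) hqp hb₀w hκ
      _ ≤ #A * #N * b₀ := by rw [← mul_assoc]; gcongr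
  have hcardL := card_image_natCast_zmod_Icc hLp
  obtain ⟨a, ha, n, hn, b, hb, t, ht, hχ⟩ := exists_quadraticChar_mul_add_mul_eq_one
    (T := (Icc 1 L).image (Nat.cast : ℕ → ZMod p)) (B := Icc 1 b₀) (by rwa [hcardL])
    (fun b hb ↦ mem_Ioo.2 ⟨(mem_Icc.1 hb).1, (mem_Icc.1 hb).2.trans_lt hb₀⟩)
    (fun u hu ↦ mem_Icc.2 ⟨(mem_Icc.1 (hprod u hu).1).1,
      Nat.le_floor (by exact_mod_cast (hprod u hu).2)⟩)
    (fun u hu ↦ Nat.le_floor (hdiv _ (hprod u hu).1))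
    (by rwa [hcardL, Nat.card_Icc, Nat.add_sub_cancel])
  obtain ⟨l, hl, rfl⟩ := mem_image.1 ht
  exact ⟨a, ha, n, hn, b, hb, l, hl, hχ⟩

theorem exists_quadraticChar_mul_add_eq_one (hA : A ⊆ Icc 1 p) (hN : N ⊆ Icc 1 p)
    (hAN : ∀ a ∈ A, ∀ n ∈ N, (a * n : ℝ) ≤ 4 * w) (hcard : κ * w ≤ #A * #N) (hw : 1 ≤ w)
    (hq : 2 ≤ q) (hqp : q ^ 5 ≤ √p) (hlog : Nat.clog 2 p ≤ q)
    (hdiv : ∀ Z ∈ Icc 1 (p ^ 3), (#Z.divisors : ℝ) ≤ C * q) (hκ : 688 * C ^ 2 < κ * q) :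
    ∃ a ∈ A, ∃ n ∈ N, ∃ k : ℕ, 0 < k ∧ k ≤ p * q ^ 5 / w ^ 2 + q ^ 5 ∧
      quadraticChar (ZMod p) (a * n + k) = 1 := by
  have hq1 : 1 ≤ q := by linarith
  have hlogp : Nat.clog 2 p < p :=
    (Nat.clog_le_of_le_pow (Nat.le_of_pred_lt Nat.lt_two_pow_self)).trans_lt
      (Nat.pred_lt (Fact.out : p.Prime).ne_zero)
  obtain ⟨a, ha, n, hn, b, hb, l, hl, hχ⟩ :=
    exists_quadraticChar_mul_add_mul_eq_one_of_le_card_mul_card hA hN hAN hcard (by linarith)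
      (by linarith) ((pow_le_pow_right₀ hq1 (by norm_num)).trans hqp) hlogp
      (Nat.le_pow_clog one_lt_two p) hlog (ceil_sqrt_mul_pow_div_lt hw hq hqp)
      ((div_le_iff₀' (by linarith)).1 (Nat.le_ceil _)) hdiv hκ
  rw [mem_Icc] at hb hl
  refine ⟨a, ha, n, hn, b * l, Nat.mul_pos hb.1 hl.1, ?_, by exact_mod_cast hχ⟩
  calc ((b * l : ℕ) : ℝ) ≤ ⌈√p * q ^ 4 / w⌉₊ * Nat.clog 2 p := by
        exact_mod_cast Nat.mul_le_mul hb.2 hl.2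
    _ ≤ ⌈√p * q ^ 4 / w⌉₊ * q := by gcongr
    _ ≤ p * q ^ 5 / w ^ 2 + q ^ 5 :=
      ceil_sqrt_mul_pow_div_mul_le (Nat.cast_nonneg p) (by linarith) hq

end Parameters

section Thresholds

open Filter

lemma eventually_clog_le_rpow {δ : ℝ} (hδ : 0 < δ) :
    ∀ᶠ n : ℕ in atTop, (Nat.clog 2 n : ℝ) ≤ (n : ℝ) ^ δ := by
  have hlog2 := Real.log_pos one_lt_two
  have hlog := (isLittleO_log_rpow_atTop hδ).bound (c := Real.log 2 / 2) (by positivity)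
  have hlarge := (tendsto_rpow_atTop hδ).eventually_ge_atTop 2
  filter_upwards [tendsto_natCast_atTop_atTop.eventually hlog,
    tendsto_natCast_atTop_atTop.eventually hlarge, eventually_ge_atTop 1] with n hlog hlarge hn
  have hn1 : (1 : ℝ) ≤ n := by exact_mod_cast hn
  rw [Real.norm_of_nonneg (Real.log_nonneg hn1), Real.norm_of_nonneg (by positivity)] at hlog
  have hlogb : Real.logb 2 n ≤ (n : ℝ) ^ δ / 2 := by
    rw [Real.logb, div_le_iff₀ hlog2]
    linarith
  rw [← Real.natCeil_logb_natCast, Nat.cast_ofNat]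
  linarith [Nat.ceil_lt_add_one (Real.logb_nonneg one_lt_two hn1)]

theorem eventually_exists_quadraticChar_mul_add_eq_one {κ η : ℝ} (hκ : 0 < κ) (hη : 0 < η) :
    ∀ᶠ p : ℕ in atTop, ∀ [Fact p.Prime] {A N : Finset ℕ} {w : ℝ}, A ⊆ Icc 1 p → N ⊆ Icc 1 p →
      1 ≤ w → (∀ a ∈ A, ∀ n ∈ N, (a * n : ℝ) ≤ 4 * w) → κ * w ≤ #A * #N →
      ∃ a ∈ A, ∃ n ∈ N, ∃ k : ℕ, 0 < k ∧ k ≤ (p : ℝ) ^ (1 + η) / w ^ 2 + (p : ℝ) ^ η ∧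
        quadraticChar (ZMod p) (a * n + k) = 1 := by
  obtain ⟨δ, hδ, hδη, hδ2⟩ : ∃ δ > 0, δ * 5 ≤ η ∧ δ * 5 ≤ 1 / 2 :=
    ⟨min η (1 / 2) / 5, by positivity, by simp, by simp⟩
  obtain ⟨C, hC⟩ := exists_card_divisors_le_mul_rpow (δ := δ / 3) (by positivity)
  have hC0 : 0 ≤ C := zero_le_one.trans (by simpa using hC 1)
  have hlarge := (tendsto_rpow_atTop hδ).comp tendsto_natCast_atTop_atTop
  filter_upwards [eventually_ge_atTop 1, eventually_clog_le_rpow hδ,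
    hlarge.eventually_ge_atTop 2, hlarge.eventually_gt_atTop (688 * C ^ 2 / κ)]
    with p hp hlog hq hCκ _ A N w hA hN hw hAN hcard
  rw [Function.comp_apply] at hq hCκ
  have hp1 : (1 : ℝ) ≤ p := by exact_mod_cast hp
  have hq5 {ε : ℝ} (hε : δ * 5 ≤ ε) : ((p : ℝ) ^ δ) ^ 5 ≤ (p : ℝ) ^ ε := by
    rw [← Real.rpow_mul_natCast p.cast_nonneg]
    exact Real.rpow_le_rpow_of_exponent_le hp1 (by exact_mod_cast hε)
  have hdiv (Z : ℕ) (hZ : Z ∈ Icc 1 (p ^ 3)) : (#Z.divisors : ℝ) ≤ C * (p : ℝ) ^ δ :=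
    calc (#Z.divisors : ℝ) ≤ C * (Z : ℝ) ^ (δ / 3) := hC Z
      _ ≤ C * ((p : ℝ) ^ 3) ^ (δ / 3) := by gcongr; exact_mod_cast (mem_Icc.1 hZ).2
      _ = C * (p : ℝ) ^ δ := by
        rw [← Real.rpow_natCast_mul p.cast_nonneg, Nat.cast_ofNat, mul_div_cancel₀ _ three_ne_zero]
  obtain ⟨a, ha, n, hn, k, hk0, hk, hχ⟩ := exists_quadraticChar_mul_add_eq_one hA hN hAN hcard hw hq
    (by rw [Real.sqrt_eq_rpow]; exact hq5 hδ2) hlog hdiv (by rwa [div_lt_iff₀' hκ] at hCκ)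
  refine ⟨a, ha, n, hn, k, hk0, hk.trans ?_, hχ⟩
  rw [Real.rpow_add (by positivity), Real.rpow_one]
  gcongr <;> exact hq5 hδη

end Thresholds

theorem iwaniec_sarkozy_analogue_general {c₀ η : ℝ} (hc₀ : 0 < c₀) (hη : 0 < η) :
    ∃ P : ℝ, ∀ (p : ℕ), p.Prime → P ≤ (p : ℝ) → ∀ (M N : ℝ), 1 ≤ M → 1 ≤ N →
      ∀ (ℳ 𝒩 : Finset ℤ),
        (∀ m ∈ ℳ, (m : ℝ) ≤ 2 * M ∧ 1 ≤ m ∧ m ≤ (p : ℤ)) →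
        (∀ n ∈ 𝒩, (n : ℝ) ≤ 2 * N ∧ 1 ≤ n ∧ n ≤ (p : ℤ)) →
        c₀ * M ≤ (#ℳ : ℝ) → c₀ * N ≤ (#𝒩 : ℝ) →
      ∃ m ∈ ℳ, ∃ n ∈ 𝒩, ∃ k : ℤ, 0 < k ∧
        (k : ℝ) ≤ (p : ℝ) ^ (1 + η) / (M * N) ^ 2 + (p : ℝ) ^ η ∧ IsQuadRes p (m * n + k) := by
  obtain ⟨P, hP⟩ := Filter.eventually_atTop.1
    (eventually_exists_quadraticChar_mul_add_eq_one (pow_pos hc₀ 2) hη)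
  refine ⟨P, fun p hp hPp M N hM hN ℳ 𝒩 hℳ h𝒩 hcM hcN ↦ ?_⟩
  have : Fact p.Prime := ⟨hp⟩
  lift ℳ to Finset ℕ using fun m hm ↦ zero_le_one.trans (hℳ m hm).2.1
  lift 𝒩 to Finset ℕ using fun n hn ↦ zero_le_one.trans (h𝒩 n hn).2.1
  simp only [forall_mem_image, card_image_of_injective _ Nat.cast_injective, Int.cast_natCast]
    at hℳ h𝒩 hcM hcN
  have hprod : ∀ m ∈ ℳ, ∀ n ∈ 𝒩, (m * n : ℝ) ≤ 4 * (M * N) := fun m hm n hn ↦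
    calc (m * n : ℝ) ≤ 2 * M * (2 * N) := by gcongr; exacts [(hℳ hm).1, (h𝒩 hn).1]
      _ = 4 * (M * N) := by ring
  have hcard : c₀ ^ 2 * (M * N) ≤ #ℳ * #𝒩 :=
    calc c₀ ^ 2 * (M * N) = c₀ * M * (c₀ * N) := by ring
      _ ≤ #ℳ * #𝒩 := by gcongr
  obtain ⟨m, hm, n, hn, k, hk0, hk, hχ⟩ := hP p (by exact_mod_cast hPp)
    (fun m hm ↦ mem_Icc.2 (by exact_mod_cast (hℳ hm).2))
    (fun n hn ↦ mem_Icc.2 (by exact_mod_cast (h𝒩 hn).2))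
    (one_le_mul_of_one_le_of_one_le hM hN) hprod hcard
  exact ⟨m, mem_image_of_mem _ hm, n, mem_image_of_mem _ hn, k, by exact_mod_cast hk0,
    by exact_mod_cast hk, (isQuadRes_iff_quadraticChar_eq_one _).2 (by exact_mod_cast hχ)⟩

/-- Theorem 2.11 (modular analogue of the Iwaniec–Sárközy problem). -/
theorem iwaniec_sarkozy_analogue (r : ℕ) (hr : 0 < r) (c₀ η : ℝ)
    (hc₀ : 0 < c₀) (hc₀' : c₀ < 1) (hη : 0 < η) :
    ∃ P : ℝ, ∀ (p : ℕ), p.Prime → P ≤ (p : ℝ) →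
      ∀ (M N : ℝ), 1 ≤ M → 1 ≤ N →
        M ^ 4 * N ^ 2 ≥ (p : ℝ) ^ (1 + 1 / (r : ℝ) + η : ℝ) →
      ∀ (ℳ 𝒩 : Finset ℤ),
        (∀ m ∈ ℳ, M ≤ (m : ℝ) ∧ (m : ℝ) ≤ 2 * M ∧ 1 ≤ m ∧ m ≤ (p : ℤ)) →
        (∀ n ∈ 𝒩, N ≤ (n : ℝ) ∧ (n : ℝ) ≤ 2 * N ∧ 1 ≤ n ∧ n ≤ (p : ℤ)) →
        c₀ * M ≤ (ℳ.card : ℝ) → c₀ * N ≤ (𝒩.card : ℝ) →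
      ∃ m ∈ ℳ, ∃ n ∈ 𝒩, ∃ k : ℤ, 0 < k ∧
        (k : ℝ) ≤ (p : ℝ) ^ (1 + 1 / (r : ℝ) + η : ℝ) / (M * N) ^ 2 + (p : ℝ) ^ η ∧
        IsQuadRes p (m * n + k) := by
  obtain ⟨P, hP⟩ := iwaniec_sarkozy_analogue_general hc₀ hη
  refine ⟨max P 1, fun p hp hPp M N hM hN _ ℳ 𝒩 hℳ h𝒩 hcM hcN ↦ ?_⟩
  obtain ⟨m, hm, n, hn, k, hk0, hk, hres⟩ := hP p hp (le_of_max_le_left hPp) M N hM hN ℳ 𝒩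
    (fun m hm ↦ (hℳ m hm).2) (fun n hn ↦ (h𝒩 n hn).2) hcM hcN
  refine ⟨m, hm, n, hn, k, hk0, hk.trans ?_, hres⟩
  gcongr
  · exact le_of_max_le_right hPp
  · exact le_add_of_nonneg_right (by positivity)
end

section
/- For every η > 0 there exist κ > 0 and a constant C = C(η) such that the following holds. For every prime p, every non-trivial multiplicative character χ modulo p, and every real x with p^{1/8 + η} ≤ x < p, one has |∑_{p₁, p₂, p₃, p₄ ≤ x} (p₁/p₃)·(p₂/p₄)·χ(p₁·p₂ − p₃·p₄)| ≤ C·x⁴·p^{−κ}, where the sum runs over quadruples of primes p₁, p₂, p₃, p₄ each at most x and (a/q) denotes the Legendre symbol of a modulo the odd prime q. -/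
open Finset

open Classical in
/-- The Legendre symbol `(a/q)` for a prime `q`, with the convention `(a/2) = 1`. -/
noncomputable def legSym (q : ℕ) (a : ℤ) : ℤ :=
  if q = 2 then 1
  else if (q : ℤ) ∣ a then 0
  else if ∃ y : ℤ, y ^ 2 ≡ a [ZMOD (q : ℤ)] then 1 else -1

/-!
Fix `p₃ = m` and apply the Cauchy–Schwarz inequality over the value of `a b - m d`, where
`(a, b, d) = (p₁, p₂, p₄)`. This removes the character and leaves the equation
`a b - a' b' = m (d - d')`. For `b ≠ b'` the number of its solutions `(a, a')` depends on `d, d'`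
only through `d - d'` and is at most about `x / b'`, so what remains is a bilinear sum of Legendre
symbols `(b / d)`, in which there is cancellation. For `b = b' ≠ m` the equation forces
`b ∣ d - d'`, which is rare for large `b`. Both gains are powers of `x`.

By duality and Hölder's inequality, the bilinear sum reduces to one in which a product of three
primes is twisted by two Legendre symbols. Such a product ranges past the product of the two moduli,
so it suffices that the sum over a complete period vanishes.
-/

theorem sum_range_mul_of_periodic_of_coprime {R : Type*} [NonUnitalNonAssocSemiring R] {m n : ℕ}
    (hm : m ≠ 0) (hn : n ≠ 0) (hmn : m.Coprime n) {f g : ℕ → R} (hf : f.Periodic m)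
    (hg : g.Periodic n) :
    ∑ a ∈ range (m * n), f a * g a = (∑ i ∈ range m, f i) * ∑ j ∈ range n, g j := by
  rw [sum_mul_sum, ← sum_product']
  refine sum_nbij (fun a ↦ (a % m, a % n)) ?_ ?_ ?_ ?_
  · intro a _
    simp [Nat.mod_lt _ (Nat.pos_of_ne_zero hm), Nat.mod_lt _ (Nat.pos_of_ne_zero hn)]
  · intro a ha b hb hab
    simp only [coe_range, Set.mem_Iio, Prod.mk.injEq] at ha hb hab
    exact ((Nat.modEq_and_modEq_iff_modEq_mul hmn).1 hab).eq_of_lt_of_lt ha hb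
  · rintro ⟨i, j⟩ hij
    simp only [coe_product, coe_range, Set.mem_prod, Set.mem_Iio] at hij
    obtain ⟨hi, hj⟩ := (Nat.chineseRemainder hmn i j).2
    refine ⟨Nat.chineseRemainder hmn i j, ?_, Prod.ext ?_ ?_⟩
    · simpa using Nat.chineseRemainder_lt_mul hmn i j hm hn
    · exact Nat.mod_eq_of_modEq hi hij.1
    · exact Nat.mod_eq_of_modEq hj hij.2
  · intro a _
    rw [hf.map_mod_nat, hg.map_mod_nat]

theorem norm_sum_range_le_of_periodic {E : Type*} [SeminormedAddCommGroup E] {f : ℕ → E} {m : ℕ}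
    (hm : 0 < m) (hf : f.Periodic m) (hf_one : ∀ a, ‖f a‖ ≤ 1) (hf_sum : ∑ a ∈ range m, f a = 0)
    (M : ℕ) : ‖∑ a ∈ range M, f a‖ ≤ m := by
  induction M using Nat.strong_induction_on with
  | _ M ih =>
    rcases lt_or_ge M m with hM | hM
    · calc ‖∑ a ∈ range M, f a‖ ≤ ∑ _a ∈ range M, (1 : ℝ) := norm_sum_le_of_le _ fun a _ ↦ hf_one a
        _ ≤ m := by simpa using hM.le
    · obtain ⟨k, rfl⟩ := Nat.exists_eq_add_of_le hM
      rw [sum_range_add, hf_sum, zero_add]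
      simp only [add_comm m, hf _]
      exact ih k (by lia)

section LegendreSymbol

variable {q r : ℕ} {a b : ℤ}

theorem legSym_two (a : ℤ) : legSym 2 a = 1 := if_pos rfl

theorem abs_legSym_le_one (q : ℕ) (a : ℤ) : |(legSym q a : ℝ)| ≤ 1 := by
  unfold legSym
  split_ifs <;> simp

theorem legSym_congr (h : a ≡ b [ZMOD q]) : legSym q a = legSym q b := by
  have hdvd : (q : ℤ) ∣ a ↔ (q : ℤ) ∣ b := h.dvd_iff
  have hsq : (∃ y : ℤ, y ^ 2 ≡ a [ZMOD q]) ↔ ∃ y : ℤ, y ^ 2 ≡ b [ZMOD q] :=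
    exists_congr fun y ↦ ⟨fun hy ↦ hy.trans h, fun hy ↦ hy.trans h.symm⟩
  classical
  unfold legSym
  exact if_congr Iff.rfl rfl (if_congr hdvd rfl (if_congr hsq rfl rfl))

theorem periodic_legSym (q : ℕ) : Function.Periodic (fun a : ℕ ↦ (legSym q a : ℝ)) q := by
  intro a
  have hmod : ((a + q : ℕ) : ℤ) ≡ a [ZMOD q] := by simp [Int.ModEq]
  exact congrArg _ (legSym_congr hmod)

theorem legSym_eq_legendreSym [Fact q.Prime] (hq : q ≠ 2) (a : ℤ) :
    legSym q a = legendreSym q a := by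
  have hdvd : (q : ℤ) ∣ a ↔ (a : ZMod q) = 0 := (ZMod.intCast_zmod_eq_zero_iff_dvd a q).symm
  have hsq : (∃ y : ℤ, y ^ 2 ≡ a [ZMOD q]) ↔ IsSquare (a : ZMod q) := by
    simp only [← ZMod.intCast_eq_intCast_iff, isSquare_iff_exists_sq, Int.cast_pow,
      ZMod.intCast_surjective.exists, eq_comm]
  simp only [legSym, if_neg hq, hdvd, hsq, legendreSym, quadraticChar_apply, quadraticCharFun]

theorem legSym_mul (hq : q.Prime) (a b : ℤ) : legSym q (a * b) = legSym q a * legSym q b := by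
  have := Fact.mk hq
  rcases eq_or_ne q 2 with rfl | hq2
  · simp only [legSym_two, mul_one]
  · simp only [legSym_eq_legendreSym hq2, legendreSym.mul]

theorem legSym_one (hq : q.Prime) : legSym q 1 = 1 := by
  have := Fact.mk hq
  rcases eq_or_ne q 2 with rfl | hq2
  · exact legSym_two 1
  · rw [legSym_eq_legendreSym hq2, legendreSym.at_one]

theorem legSym_prod (hq : q.Prime) {ι : Type*} (s : Finset ι) (f : ι → ℤ) :
    legSym q (∏ i ∈ s, f i) = ∏ i ∈ s, legSym q (f i) :=
  map_prod (⟨⟨legSym q, legSym_one hq⟩, legSym_mul hq⟩ : ℤ →* ℤ) f s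

theorem sum_range_legSym (hq : q.Prime) (hq2 : q ≠ 2) :
    ∑ a ∈ range q, (legSym q a : ℝ) = 0 := by
  have := Fact.mk hq
  have hsum : ∑ a : ZMod q, quadraticChar (ZMod q) a = 0 :=
    quadraticChar_sum_zero (by rwa [ZMod.ringChar_zmod_n])
  suffices ∑ a ∈ range q, legSym q a = ∑ a : ZMod q, quadraticChar (ZMod q) a by
    exact_mod_cast this.trans hsum
  refine sum_nbij' (fun a ↦ (a : ZMod q)) ZMod.val (by simp) (by simp [ZMod.val_lt]) ?_ (by simp) ?_
  · exact fun a ha ↦ ZMod.val_cast_of_lt (mem_range.1 ha)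
  · exact fun a _ ↦ by rw [legSym_eq_legendreSym hq2, legendreSym, Int.cast_natCast]

theorem sum_range_legSym_mul_legSym (hq : q.Prime) (hr : r.Prime) (hqr : q ≠ r) :
    ∑ a ∈ range (q * r), (legSym q a : ℝ) * legSym r a = 0 := by
  rw [sum_range_mul_of_periodic_of_coprime hq.ne_zero hr.ne_zero ((Nat.coprime_primes hq hr).2 hqr)
    (periodic_legSym q) (periodic_legSym r)]
  rcases eq_or_ne q 2 with rfl | hq2
  · rw [sum_range_legSym hr hqr.symm, mul_zero]
  · rw [sum_range_legSym hq hq2, zero_mul]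

theorem abs_legSym_mul_legSym_le_one (q r : ℕ) (a b : ℤ) :
    |(legSym q a : ℝ) * legSym r b| ≤ 1 := by
  rw [abs_mul]
  exact mul_le_one₀ (abs_legSym_le_one q a) (abs_nonneg _) (abs_legSym_le_one r b)

theorem abs_sum_range_legSym_mul_legSym_le (hq : q.Prime) (hr : r.Prime) (hqr : q ≠ r) (M : ℕ) :
    |∑ a ∈ range M, (legSym q a : ℝ) * legSym r a| ≤ q * r := by
  have hper : Function.Periodic (fun a : ℕ ↦ (legSym q a : ℝ) * legSym r a) (q * r) := by
    refine Function.Periodic.mul ?_ ?_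
    · simpa only [smul_eq_mul, mul_comm] using (periodic_legSym q).nsmul r
    · simpa only [smul_eq_mul] using (periodic_legSym r).nsmul q
  simpa using norm_sum_range_le_of_periodic (Nat.mul_pos hq.pos hr.pos) hper
    (fun a ↦ abs_legSym_mul_legSym_le_one q r a a) (sum_range_legSym_mul_legSym hq hr hqr) M

end LegendreSymbol

section MeanValues

theorem abs_signType_cast_le_one (σ : SignType) : |(σ : ℝ)| ≤ 1 := by
  cases σ <;> simp

theorem exists_sum_abs_le_sum_abs_dual {ι κ : Type*} (s : Finset ι) (t : Finset κ) (K : ι → κ → ℝ)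
    {c : ι → ℝ} (hc : ∀ i, |c i| ≤ 1) :
    ∃ θ : κ → ℝ, (∀ j, |θ j| ≤ 1) ∧
      ∑ j ∈ t, |∑ i ∈ s, c i * K i j| ≤ ∑ i ∈ s, |∑ j ∈ t, θ j * K i j| := by
  let θ : κ → ℝ := fun j ↦ SignType.sign (∑ i ∈ s, c i * K i j)
  refine ⟨θ, fun j ↦ abs_signType_cast_le_one _, ?_⟩
  calc ∑ j ∈ t, |∑ i ∈ s, c i * K i j| = ∑ j ∈ t, θ j * ∑ i ∈ s, c i * K i j :=
        sum_congr rfl fun j _ ↦ (sign_mul_self _).symm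
    _ = ∑ i ∈ s, c i * ∑ j ∈ t, θ j * K i j := by
        simp only [mul_sum]
        rw [sum_comm]
        simp only [mul_left_comm]
    _ ≤ ∑ i ∈ s, |∑ j ∈ t, θ j * K i j| := sum_le_sum fun i _ ↦ by
        refine (le_abs_self _).trans ?_
        rw [abs_mul]
        exact mul_le_of_le_one_left (abs_nonneg _) (hc i)

theorem card_primesLE_le (N : ℕ) : #N.primesLE ≤ N := by
  rw [Nat.primesLE_eq_filter_Icc_one]
  exact (card_filter_le _ _).trans (by simp)

theorem sum_sq_sum_legSym_le (N M : ℕ) {w : ℕ → ℝ} (hw : ∀ q, |w q| ≤ 1) :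
    ∑ a ∈ range M, (∑ q ∈ N.primesLE, w q * legSym q a) ^ 2 ≤ N * M + (N : ℝ) ^ 4 := by
  have hcorr : ∀ q ∈ N.primesLE, ∀ r ∈ N.primesLE,
      |∑ a ∈ range M, (legSym q a : ℝ) * legSym r a| ≤ (if q = r then (M : ℝ) else 0) + N ^ 2 := by
    intro q hq r hr
    obtain ⟨hqN, hq⟩ := Nat.mem_primesLE.1 hq
    obtain ⟨hrN, hr⟩ := Nat.mem_primesLE.1 hr
    split_ifs with hqr
    · calc |∑ a ∈ range M, (legSym q a : ℝ) * legSym r a| ≤ ∑ _a ∈ range M, (1 : ℝ) :=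
            (abs_sum_le_sum_abs _ _).trans
              (sum_le_sum fun a _ ↦ abs_legSym_mul_legSym_le_one q r a a)
        _ ≤ M + (N : ℝ) ^ 2 := by simp
    · calc |∑ a ∈ range M, (legSym q a : ℝ) * legSym r a| ≤ (q : ℝ) * r :=
            abs_sum_range_legSym_mul_legSym_le hq hr hqr M
        _ ≤ N * N := by gcongr
        _ = 0 + (N : ℝ) ^ 2 := by ring
  calc ∑ a ∈ range M, (∑ q ∈ N.primesLE, w q * legSym q a) ^ 2
      = ∑ q ∈ N.primesLE, ∑ r ∈ N.primesLE,
          w q * w r * ∑ a ∈ range M, (legSym q a : ℝ) * legSym r a := by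
        simp only [sq, sum_mul_sum]
        rw [sum_comm]
        refine sum_congr rfl fun q _ ↦ sum_comm.trans ?_
        simp only [mul_sum, mul_mul_mul_comm]
    _ ≤ ∑ q ∈ N.primesLE, ∑ r ∈ N.primesLE, ((if q = r then (M : ℝ) else 0) + N ^ 2) := by
        refine sum_le_sum fun q hq ↦ sum_le_sum fun r hr ↦ (le_abs_self _).trans ?_
        rw [abs_mul, abs_mul]
        exact (mul_le_of_le_one_left (abs_nonneg _)
          (mul_le_one₀ (hw q) (abs_nonneg _) (hw r))).trans (hcorr q hq r hr)
    _ = #N.primesLE * M + #N.primesLE * (#N.primesLE * (N : ℝ) ^ 2) := by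
        simp +contextual [sum_add_distrib, sum_ite_eq]
    _ ≤ N * M + N * (N * (N : ℝ) ^ 2) := by
        have := card_primesLE_le N
        gcongr
    _ = N * M + (N : ℝ) ^ 4 := by ring

theorem card_filter_piFinset_prod_eq_le {s : Finset ℕ} (hs : ∀ a ∈ s, a.Prime) (k n : ℕ) :
    #{t ∈ Fintype.piFinset fun _ : Fin k ↦ s | ∏ i, t i = n} ≤ k.factorial := by
  set T := {t ∈ Fintype.piFinset fun _ : Fin k ↦ s | ∏ i, t i = n}
  have hperm : ∀ t ∈ T, (List.ofFn t).Perm n.primeFactorsList := by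
    intro t ht
    obtain ⟨ht, hprod⟩ := mem_filter.1 ht
    refine Nat.primeFactorsList_unique (by rw [List.prod_ofFn, hprod]) fun a ha ↦ ?_
    obtain ⟨i, rfl⟩ := List.mem_ofFn.1 ha
    exact hs _ (Fintype.mem_piFinset.1 ht i)
  rcases T.eq_empty_or_nonempty with hT | ⟨t₀, ht₀⟩
  · simp [hT]
  have hlength : n.primeFactorsList.length = k := by
    rw [← (hperm t₀ ht₀).length_eq, List.length_ofFn]
  calc #T ≤ #n.primeFactorsList.permutations.toFinset :=
        card_le_card_of_injOn List.ofFn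
          (fun t ht ↦ by simpa [List.mem_permutations] using hperm t ht)
          List.ofFn_injective.injOn
    _ ≤ k.factorial := by
        simpa only [List.length_permutations, hlength] using
          n.primeFactorsList.permutations.toFinset_card_le

theorem sum_piFinset_prod_le {s : Finset ℕ} {N : ℕ} (hs : ∀ a ∈ s, a.Prime) (hsN : ∀ a ∈ s, a ≤ N)
    (k : ℕ) {F : ℕ → ℝ} (hF : ∀ n, 0 ≤ F n) :
    ∑ t ∈ Fintype.piFinset fun _ : Fin k ↦ s, F (∏ i, t i) ≤
      k.factorial * ∑ n ∈ range (N ^ k + 1), F n := by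
  have hmaps : ∀ t ∈ Fintype.piFinset fun _ : Fin k ↦ s, ∏ i, t i ∈ range (N ^ k + 1) := by
    intro t ht
    rw [mem_range_succ_iff]
    simpa using prod_le_pow_card univ t N fun i _ ↦ hsN _ (Fintype.mem_piFinset.1 ht i)
  rw [← sum_fiberwise_of_maps_to' hmaps F, mul_sum]
  refine sum_le_sum fun n _ ↦ ?_
  rw [sum_const, nsmul_eq_mul]
  exact mul_le_mul_of_nonneg_right
    (by exact_mod_cast card_filter_piFinset_prod_eq_le hs k n) (hF n)

theorem sum_mul_sum_legSym_pow {P : Finset ℕ} (hP : ∀ q ∈ P, q.Prime) (s : Finset ℕ)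
    (w θ : ℕ → ℝ) (k : ℕ) :
    ∑ q ∈ P, w q * (∑ a ∈ s, θ a * legSym q a) ^ k =
      ∑ t ∈ Fintype.piFinset fun _ : Fin k ↦ s,
        (∏ i, θ (t i)) * ∑ q ∈ P, w q * legSym q (∏ i, t i : ℕ) := by
  simp only [sum_pow', mul_sum]
  rw [sum_comm]
  refine sum_congr rfl fun t _ ↦ sum_congr rfl fun q hq ↦ ?_
  rw [prod_mul_distrib, Nat.cast_prod, legSym_prod (hP q hq), Int.cast_prod, mul_left_comm]

-- Expanding the `k`-th power makes the inner variable as long as `N ^ k`, which for `k ≥ 3` exceeds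
-- the square of the moduli `q ≤ N`, so that the elementary bound on incomplete sums suffices.
theorem sq_sum_abs_sum_legSym_pow_le (N k : ℕ) {θ : ℕ → ℝ} (hθ : ∀ a, |θ a| ≤ 1) :
    (∑ q ∈ N.primesLE, |∑ a ∈ N.primesLE, θ a * legSym q a| ^ k) ^ 2 ≤
      N ^ k * (k.factorial * (N * (N ^ k + 1) + (N : ℝ) ^ 4)) := by
  set P := N.primesLE
  have hP : ∀ q ∈ P, q.Prime := fun q ↦ Nat.prime_of_mem_primesLE
  set w : ℕ → ℝ := fun q ↦ SignType.sign ((∑ a ∈ P, θ a * legSym q a) ^ k)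
  have hw : ∀ q, |w q| ≤ 1 := fun q ↦ abs_signType_cast_le_one _
  set T := Fintype.piFinset fun _ : Fin k ↦ P
  have hT : (#T : ℝ) ≤ N ^ k := by
    rw [Fintype.card_piFinset_const]
    exact_mod_cast Nat.pow_le_pow_left (card_primesLE_le N) _
  calc (∑ q ∈ P, |∑ a ∈ P, θ a * legSym q a| ^ k) ^ 2
      = (∑ q ∈ P, w q * (∑ a ∈ P, θ a * legSym q a) ^ k) ^ 2 := by
        simp only [w, sign_mul_self, abs_pow]
    _ = (∑ t ∈ T, (∏ i, θ (t i)) * ∑ q ∈ P, w q * legSym q (∏ i, t i : ℕ)) ^ 2 := by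
        rw [sum_mul_sum_legSym_pow hP]
    _ ≤ #T * ∑ t ∈ T, ((∏ i, θ (t i)) * ∑ q ∈ P, w q * legSym q (∏ i, t i : ℕ)) ^ 2 :=
        sq_sum_le_card_mul_sum_sq
    _ ≤ #T * ∑ t ∈ T, (∑ q ∈ P, w q * legSym q (∏ i, t i : ℕ)) ^ 2 := by
        refine mul_le_mul_of_nonneg_left (sum_le_sum fun t _ ↦ ?_) (Nat.cast_nonneg _)
        rw [mul_pow]
        refine mul_le_of_le_one_left (sq_nonneg _) ((sq_le_one_iff_abs_le_one _).2 ?_)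
        rw [abs_prod]
        exact prod_le_one (fun _ _ ↦ abs_nonneg _) fun _ _ ↦ hθ _
    _ ≤ N ^ k * (k.factorial * ∑ n ∈ range (N ^ k + 1), (∑ q ∈ P, w q * legSym q n) ^ 2) := by
        gcongr
        exact sum_piFinset_prod_le hP (fun a ↦ Nat.le_of_mem_primesLE) k
          (F := fun n ↦ (∑ q ∈ P, w q * legSym q n) ^ 2) fun n ↦ sq_nonneg _
    _ ≤ N ^ k * (k.factorial * (N * (N ^ k + 1) + (N : ℝ) ^ 4)) := by
        gcongr
        exact_mod_cast sum_sq_sum_legSym_le N (N ^ k + 1) hw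

theorem pow_six_sum_abs_sum_legSym_le (N : ℕ) {c : ℕ → ℝ} (hc : ∀ q, |c q| ≤ 1) :
    (∑ a ∈ N.primesLE, |∑ q ∈ N.primesLE, c q * legSym q a|) ^ 6 ≤ 18 * (N : ℝ) ^ 11 := by
  set P := N.primesLE
  obtain ⟨θ, hθ, hdual⟩ := exists_sum_abs_le_sum_abs_dual P P (fun q a ↦ (legSym q a : ℝ)) hc
  set X : ℕ → ℝ := fun q ↦ |∑ a ∈ P, θ a * legSym q a|
  have hcard : (#P : ℝ) ≤ N := by exact_mod_cast card_primesLE_le N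
  have hN : (N : ℝ) ≤ (N : ℝ) ^ 4 := by exact_mod_cast Nat.le_self_pow (by norm_num) N
  calc (∑ a ∈ P, |∑ q ∈ P, c q * legSym q a|) ^ 6 ≤ (∑ q ∈ P, X q) ^ 6 := by gcongr
    _ = ((∑ q ∈ P, X q) ^ 3) ^ 2 := by ring
    _ ≤ (#P ^ 2 * ∑ q ∈ P, X q ^ 3) ^ 2 := by
        gcongr
        exact pow_sum_le_card_mul_sum_pow (fun q _ ↦ abs_nonneg _) 2
    _ = #P ^ 4 * (∑ q ∈ P, X q ^ 3) ^ 2 := by ring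
    _ ≤ N ^ 4 * (N ^ 3 * (6 * (N * (N ^ 3 + 1) + (N : ℝ) ^ 4))) := by
        gcongr
        exact sq_sum_abs_sum_legSym_pow_le N 3 hθ
    _ = (N : ℝ) ^ 7 * (12 * N ^ 4 + 6 * N) := by ring
    _ ≤ (N : ℝ) ^ 7 * (12 * N ^ 4 + 6 * N ^ 4) := by gcongr
    _ = 18 * (N : ℝ) ^ 11 := by ring

end MeanValues

section Counting

variable {A D : Finset ℕ} {N k b b' : ℕ}

theorem card_le_div_add_one_of_modEq (hA : ∀ a ∈ A, a ≤ N)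
    (hmod : ∀ a ∈ A, ∀ a' ∈ A, a ≡ a' [MOD k]) : #A ≤ N / k + 1 := by
  calc #A ≤ #(range (N / k + 1)) := by
        refine card_le_card_of_injOn (· / k) (fun a ha ↦ ?_) fun a ha a' ha' h ↦ ?_
        · exact mem_coe.2 (mem_range_succ_iff.2 (Nat.div_le_div_right (hA a ha)))
        · have hdiv : a / k = a' / k := h
          rw [← Nat.div_add_mod a k, ← Nat.div_add_mod a' k, hmod a ha a' ha', hdiv]
    _ = N / k + 1 := card_range _

theorem card_Icc_neg_natCast (N : ℕ) : #(Icc (-(N : ℤ)) N) = 2 * N + 1 := by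
  rw [Int.card_Icc]
  lia

theorem injOn_fst_mul_sub_mul_eq (A : Finset ℕ) (b : ℕ) (hb' : b' ≠ 0) (n : ℤ) :
    Set.InjOn Prod.fst (SetLike.coe {z ∈ A ×ˢ A | (z.1 : ℤ) * b - z.2 * b' = n}) := by
  rintro ⟨a₁, a₁'⟩ h₁ ⟨a₂, a₂'⟩ h₂ rfl
  have hmul : (a₁' : ℤ) * b' = a₂' * b' := by linarith [(mem_filter.1 h₁).2, (mem_filter.1 h₂).2]
  simpa [hb'] using hmul

theorem card_filter_mul_sub_mul_eq_le (A : Finset ℕ) (b : ℕ) (hb' : b' ≠ 0) (n : ℤ) :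
    #{z ∈ A ×ˢ A | (z.1 : ℤ) * b - z.2 * b' = n} ≤ #A :=
  card_le_card_of_injOn Prod.fst (fun _ hz ↦ (mem_product.1 (mem_filter.1 hz).1).1)
    (injOn_fst_mul_sub_mul_eq A b hb' n)

theorem card_filter_mul_sub_mul_eq_le_of_coprime (hA : ∀ a ∈ A, a ≤ N) (hbb' : b.Coprime b')
    (hb' : b' ≠ 0) (n : ℤ) :
    #{z ∈ A ×ˢ A | (z.1 : ℤ) * b - z.2 * b' = n} ≤ N / b' + 1 := by
  rw [← card_image_of_injOn (injOn_fst_mul_sub_mul_eq A b hb' n)]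
  refine card_le_div_add_one_of_modEq ?_ ?_
  · simp only [mem_image, mem_filter, mem_product]
    rintro _ ⟨z, hz, rfl⟩
    exact hA _ hz.1.1
  · simp only [mem_image, mem_filter]
    rintro _ ⟨z₁, ⟨-, h₁⟩, rfl⟩ _ ⟨z₂, ⟨-, h₂⟩, rfl⟩
    have hmod : z₁.1 * b ≡ z₂.1 * b [MOD b'] := by
      rw [← Int.natCast_modEq_iff, Int.modEq_iff_dvd]
      exact ⟨z₂.2 - z₁.2, by push_cast; linarith⟩
    exact Nat.ModEq.cancel_right_of_coprime hbb'.symm hmod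

theorem card_filter_dvd_sub_le (hD : ∀ d ∈ D, d ≤ N) (b : ℕ) :
    #{w ∈ D ×ˢ D | (b : ℤ) ∣ w.1 - w.2} ≤ #D * (N / b + 1) := by
  have hfiber : ∀ d ∈ D, #{d' ∈ D | (b : ℤ) ∣ (d : ℤ) - (d' : ℕ)} ≤ N / b + 1 := by
    refine fun d _ ↦ card_le_div_add_one_of_modEq (fun a ha ↦ hD a (mem_filter.1 ha).1) ?_
    intro a ha a' ha'
    exact (Nat.modEq_iff_dvd.2 (mem_filter.1 ha).2).trans
      (Nat.modEq_iff_dvd.2 (mem_filter.1 ha').2).symm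
  calc #{w ∈ D ×ˢ D | (b : ℤ) ∣ w.1 - w.2} = ∑ d ∈ D, #{d' ∈ D | (b : ℤ) ∣ (d : ℤ) - (d' : ℕ)} := by
        simp only [card_filter, sum_product]
    _ ≤ #D * (N / b + 1) := sum_le_card_nsmul _ _ _ hfiber

end Counting

section Dispersion

/-- The weighted number of solutions `a, a' ∈ A` of `a * b - a' * b' = n`, where the solution
`(a, a')` has weight `α a * α a'`. -/
def linearCorrelation (A : Finset ℕ) (α : ℕ → ℝ) (b b' : ℕ) (n : ℤ) : ℝ :=
  ∑ z ∈ A ×ˢ A with (z.1 : ℤ) * b - z.2 * b' = n, α z.1 * α z.2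

/-- The kernel value `K (d - h) b'`, extended by zero to those `d` for which `d - h ∉ D`. It serves
as the coefficient of `K d b` in the sum over pairs with a given difference `h`. -/
def shiftedKernel (D : Finset ℕ) (K : ℕ → ℕ → ℝ) (b' : ℕ) (h : ℤ) (d : ℕ) : ℝ :=
  ∑ d' ∈ D with (d : ℤ) - (d' : ℕ) = h, K d' b'

variable {A D Q : Finset ℕ} {N m b b' : ℕ} {α : ℕ → ℝ} {K : ℕ → ℕ → ℝ}

theorem abs_linearCorrelation_le (A : Finset ℕ) (hα : ∀ a, |α a| ≤ 1) (b b' : ℕ) (n : ℤ) :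
    |linearCorrelation A α b b' n| ≤ #{z ∈ A ×ˢ A | (z.1 : ℤ) * b - z.2 * b' = n} := by
  refine (abs_sum_le_sum_abs _ _).trans ((sum_le_card_nsmul _ _ 1 fun z _ ↦ ?_).trans (by simp))
  rw [abs_mul]
  exact mul_le_one₀ (hα _) (abs_nonneg _) (hα _)

theorem linearCorrelation_self_eq_zero (A : Finset ℕ) (α : ℕ → ℝ) {n : ℤ} (hn : ¬(b : ℤ) ∣ n) :
    linearCorrelation A α b b n = 0 := by
  refine sum_eq_zero fun z hz ↦ absurd ⟨(z.1 : ℤ) - z.2, ?_⟩ hn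
  rw [← (mem_filter.1 hz).2]
  ring

theorem abs_shiftedKernel_le_one (D : Finset ℕ) (hK : ∀ d b, |K d b| ≤ 1) (b' : ℕ) (h : ℤ) (d : ℕ) :
    |shiftedKernel D K b' h d| ≤ 1 := by
  have hcard : #{d' ∈ D | ((d : ℤ) - (d' : ℕ) = h)} ≤ 1 := by
    refine card_le_one.2 fun d₁ h₁ d₂ h₂ ↦ ?_
    have := (mem_filter.1 h₁).2
    have := (mem_filter.1 h₂).2
    lia
  refine (abs_sum_le_sum_abs _ _).trans ((sum_le_card_nsmul _ _ 1 fun d' _ ↦ hK d' b').trans ?_)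
  simpa using hcard

theorem sum_mul_linearCorrelation_le_of_coprime (hA : ∀ a ∈ A, a ≤ N) (hD : ∀ d ∈ D, d ≤ N)
    (hα : ∀ a, |α a| ≤ 1) (K : ℕ → ℕ → ℝ) (hbb' : b.Coprime b') (hb' : b' ≠ 0) (m : ℕ) :
    ∑ w ∈ D ×ˢ D, K w.1 b * K w.2 b' * linearCorrelation A α b b' (m * (w.1 - w.2)) ≤
      ((N / b' : ℕ) + 1) *
        ∑ h ∈ Icc (-(N : ℤ)) N, |∑ d ∈ D, shiftedKernel D K b' h d * K d b| := by
  have hmaps : ∀ w ∈ D ×ˢ D, (w.1 : ℤ) - w.2 ∈ Icc (-(N : ℤ)) N := by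
    intro w hw
    have h₁ := hD _ (mem_product.1 hw).1
    have h₂ := hD _ (mem_product.1 hw).2
    exact mem_Icc.2 ⟨by lia, by lia⟩
  have hfiber : ∀ h : ℤ, ∑ w ∈ D ×ˢ D with (w.1 : ℤ) - w.2 = h, K w.1 b * K w.2 b' =
      ∑ d ∈ D, shiftedKernel D K b' h d * K d b := by
    intro h
    simp only [shiftedKernel, sum_filter, sum_product, sum_mul, ite_mul, zero_mul, mul_comm (K _ b)]
  rw [← sum_fiberwise_of_maps_to hmaps, mul_sum]
  refine sum_le_sum fun h _ ↦ ?_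
  calc ∑ w ∈ D ×ˢ D with (w.1 : ℤ) - w.2 = h,
        K w.1 b * K w.2 b' * linearCorrelation A α b b' (m * (w.1 - w.2))
      = linearCorrelation A α b b' (m * h) * ∑ d ∈ D, shiftedKernel D K b' h d * K d b := by
        rw [← hfiber, mul_sum]
        refine sum_congr rfl fun w hw ↦ ?_
        rw [(mem_filter.1 hw).2, mul_comm]
    _ ≤ |linearCorrelation A α b b' (m * h)| * |∑ d ∈ D, shiftedKernel D K b' h d * K d b| := by
        rw [← abs_mul]
        exact le_abs_self _
    _ ≤ ((N / b' : ℕ) + 1) * |∑ d ∈ D, shiftedKernel D K b' h d * K d b| := by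
        gcongr
        refine (abs_linearCorrelation_le A hα b b' _).trans ?_
        exact_mod_cast card_filter_mul_sub_mul_eq_le_of_coprime hA hbb' hb' _

theorem sum_mul_linearCorrelation_self_le (hA : #A ≤ N) (hDN : #D ≤ N) (hD : ∀ d ∈ D, d ≤ N)
    (hα : ∀ a, |α a| ≤ 1) (hK : ∀ d b, |K d b| ≤ 1) (hb : b ≠ 0) (hbm : b.Coprime m) :
    ∑ w ∈ D ×ˢ D, K w.1 b * K w.2 b * linearCorrelation A α b b (m * (w.1 - w.2)) ≤
      N ^ 2 * ((N / b : ℕ) + 1) := by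
  have hdvd : ∀ n : ℤ, (b : ℤ) ∣ m * n ↔ (b : ℤ) ∣ n := fun n ↦
    ⟨(Nat.isCoprime_iff_coprime.2 hbm).dvd_of_dvd_mul_left, fun h ↦ h.mul_left _⟩
  have hcorr : ∀ n : ℤ, |linearCorrelation A α b b n| ≤ N := fun n ↦
    (abs_linearCorrelation_le A hα b b n).trans
      (by exact_mod_cast (card_filter_mul_sub_mul_eq_le A b hb n).trans hA)
  calc ∑ w ∈ D ×ˢ D, K w.1 b * K w.2 b * linearCorrelation A α b b (m * (w.1 - w.2))
      ≤ ∑ w ∈ D ×ˢ D, if (b : ℤ) ∣ w.1 - w.2 then (N : ℝ) else 0 := by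
        refine sum_le_sum fun w _ ↦ ?_
        split_ifs with hw
        · refine (le_abs_self _).trans ?_
          rw [abs_mul, abs_mul]
          exact (mul_le_of_le_one_left (abs_nonneg _)
            (mul_le_one₀ (hK _ _) (abs_nonneg _) (hK _ _))).trans (hcorr _)
        · rw [linearCorrelation_self_eq_zero A α (mt (hdvd _).1 hw), mul_zero]
    _ = #{w ∈ D ×ˢ D | (b : ℤ) ∣ w.1 - w.2} * N := by
        rw [← sum_filter, sum_const, nsmul_eq_mul]
    _ ≤ (#D * (N / b + 1) : ℕ) * N := by
        gcongr
        exact card_filter_dvd_sub_le hD b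
    _ ≤ (N * (N / b + 1) : ℕ) * N := by gcongr
    _ = N ^ 2 * ((N / b : ℕ) + 1) := by push_cast; ring

theorem sum_mul_linearCorrelation_le {W : ℝ} (hA : A ⊆ Icc 1 N) (hD : D ⊆ Icc 1 N)
    (hα : ∀ a, |α a| ≤ 1) (hK : ∀ d b, |K d b| ≤ 1) (hb' : b' ≠ 0) (hbm : b.Coprime m)
    (hbb' : b ≠ b' → b.Coprime b') (hW : ((N / b' : ℕ) : ℝ) + 1 ≤ W) :
    ∑ w ∈ D ×ˢ D, K w.1 b * K w.2 b' * linearCorrelation A α b b' (m * (w.1 - w.2)) ≤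
      (if b = b' then N ^ 2 * W else 0) +
        W * ∑ h ∈ Icc (-(N : ℤ)) N, |∑ d ∈ D, shiftedKernel D K b' h d * K d b| := by
  have hle : ∀ {s : Finset ℕ}, s ⊆ Icc 1 N → ∀ a ∈ s, a ≤ N := fun hs a ha ↦ (mem_Icc.1 (hs ha)).2
  have hcard : ∀ {s : Finset ℕ}, s ⊆ Icc 1 N → #s ≤ N := fun hs ↦ by simpa using card_le_card hs
  have hW₀ : 0 ≤ W := le_trans (by positivity) hW
  split_ifs with h
  · subst h
    refine (sum_mul_linearCorrelation_self_le (hcard hA) (hcard hD) (hle hD) hα hK hb' hbm).trans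
      (le_add_of_le_of_nonneg ?_ (by positivity))
    gcongr
  · rw [zero_add]
    refine (sum_mul_linearCorrelation_le_of_coprime (hle hA) (hle hD) hα K (hbb' h) hb' m).trans ?_
    gcongr

theorem sum_sum_mul_linearCorrelation_le {W B : ℝ} (hA : A ⊆ Icc 1 N) (hD : D ⊆ Icc 1 N)
    (hQ : Q ⊆ Icc 1 N) (hQ_coprime : (Q : Set ℕ).Pairwise Nat.Coprime)
    (hm : ∀ b ∈ Q, b.Coprime m) (hα : ∀ a, |α a| ≤ 1) (hK : ∀ d b, |K d b| ≤ 1)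
    (hW : ∀ b ∈ Q, ((N / b : ℕ) : ℝ) + 1 ≤ W) (hW₀ : 0 ≤ W)
    (hB : ∀ c : ℕ → ℝ, (∀ d, |c d| ≤ 1) → ∑ b ∈ Q, |∑ d ∈ D, c d * K d b| ≤ B) :
    ∑ b ∈ Q, ∑ b' ∈ Q, ∑ w ∈ D ×ˢ D,
        K w.1 b * K w.2 b' * linearCorrelation A α b b' (m * (w.1 - w.2)) ≤
      N * W * ((2 * N + 1) * B + N ^ 2) := by
  have hB₀ : 0 ≤ B := (sum_nonneg fun b _ ↦ abs_nonneg _).trans (hB 0 (by simp))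
  calc ∑ b ∈ Q, ∑ b' ∈ Q, ∑ w ∈ D ×ˢ D,
        K w.1 b * K w.2 b' * linearCorrelation A α b b' (m * (w.1 - w.2))
      ≤ ∑ b ∈ Q, ∑ b' ∈ Q, ((if b = b' then N ^ 2 * W else 0) +
          W * ∑ h ∈ Icc (-(N : ℤ)) N, |∑ d ∈ D, shiftedKernel D K b' h d * K d b|) :=
        sum_le_sum fun b hb ↦ sum_le_sum fun b' hb' ↦ sum_mul_linearCorrelation_le hA hD hα hK
          (Nat.one_le_iff_ne_zero.1 (mem_Icc.1 (hQ hb')).1) (hm b hb) (hQ_coprime hb hb')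
          (hW b' hb')
    _ = #Q * (N ^ 2 * W) + W * ∑ b' ∈ Q, ∑ h ∈ Icc (-(N : ℤ)) N,
          ∑ b ∈ Q, |∑ d ∈ D, shiftedKernel D K b' h d * K d b| := by
        simp only [sum_add_distrib, sum_ite_eq, ← mul_sum]
        rw [sum_congr rfl fun b hb ↦ if_pos hb, sum_const, nsmul_eq_mul, sum_comm]
        simp only [sum_comm (s := Q) (t := Icc (-(N : ℤ)) N)]
    _ ≤ #Q * (N ^ 2 * W) + W * ∑ _b' ∈ Q, ∑ _h ∈ Icc (-(N : ℤ)) N, B := by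
        gcongr with b' _ h
        exact hB _ (abs_shiftedKernel_le_one D hK b' h)
    _ = #Q * (W * ((2 * N + 1) * B + N ^ 2)) := by
        simp only [sum_const, nsmul_eq_mul, card_Icc_neg_natCast]
        push_cast
        ring
    _ ≤ N * (W * ((2 * N + 1) * B + N ^ 2)) := by
        gcongr
        simpa using card_le_card hQ
    _ = N * W * ((2 * N + 1) * B + N ^ 2) := by ring

variable {E : Type*} [SeminormedAddCommGroup E] [NormedSpace ℝ E]

theorem norm_sq_sum_smul_comp_le {τ κ : Type*} [DecidableEq κ] {T : Finset τ} {R : Finset κ}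
    {r : τ → κ} (hr : ∀ t ∈ T, r t ∈ R) (u : τ → ℝ) {f : κ → E} (hf : ∀ n, ‖f n‖ ≤ 1) :
    ‖∑ t ∈ T, u t • f (r t)‖ ^ 2 ≤ #R * ∑ t ∈ T, ∑ t' ∈ T with r t' = r t, u t * u t' := by
  have hnorm : ‖∑ t ∈ T, u t • f (r t)‖ ≤ ∑ n ∈ R, |∑ t ∈ T with r t = n, u t| := by
    rw [← sum_fiberwise_of_maps_to hr]
    refine norm_sum_le_of_le _ fun n _ ↦ ?_
    rw [sum_congr rfl fun t ht ↦ by rw [(mem_filter.1 ht).2], ← sum_smul, norm_smul]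
    exact mul_le_of_le_one_right (abs_nonneg _) (hf n)
  calc ‖∑ t ∈ T, u t • f (r t)‖ ^ 2 ≤ (∑ n ∈ R, |∑ t ∈ T with r t = n, u t|) ^ 2 := by gcongr
    _ ≤ #R * ∑ n ∈ R, |∑ t ∈ T with r t = n, u t| ^ 2 := sq_sum_le_card_mul_sum_sq
    _ = #R * ∑ n ∈ R, ∑ t ∈ T with r t = n, ∑ t' ∈ T with r t' = r t, u t * u t' := by
        congr 1
        refine sum_congr rfl fun n _ ↦ ?_
        rw [sq_abs, sq, sum_mul_sum]
        exact sum_congr rfl fun t ht ↦ by rw [(mem_filter.1 ht).2]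
    _ = #R * ∑ t ∈ T, ∑ t' ∈ T with r t' = r t, u t * u t' := by
        rw [sum_fiberwise_of_maps_to hr]

theorem norm_sq_sum_smul_mul_sub_mul_le (hA : ∀ a ∈ A, a ≤ N) (hD : ∀ d ∈ D, d ≤ N)
    (hQ : ∀ b ∈ Q, b ≤ N) (hm : m ≤ N) (α : ℕ → ℝ) (K : ℕ → ℕ → ℝ) {f : ℤ → E}
    (hf : ∀ n, ‖f n‖ ≤ 1) :
    ‖∑ b ∈ Q, ∑ d ∈ D, ∑ a ∈ A, (α a * K d b) • f (a * b - m * d)‖ ^ 2 ≤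
      (2 * N ^ 2 + 1) * ∑ b ∈ Q, ∑ b' ∈ Q, ∑ w ∈ D ×ˢ D,
        K w.1 b * K w.2 b' * linearCorrelation A α b b' (m * (w.1 - w.2)) := by
  let r : ℕ × ℕ × ℕ → ℤ := fun t ↦ t.2.2 * t.1 - m * t.2.1
  let u : ℕ × ℕ × ℕ → ℝ := fun t ↦ α t.2.2 * K t.2.1 t.1
  have hr : ∀ t ∈ Q ×ˢ D ×ˢ A, r t ∈ Icc (-(N ^ 2 : ℤ)) (N ^ 2) := by
    rintro ⟨b, d, a⟩ ht
    simp only [mem_product] at ht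
    have hab : (a * b : ℤ) ≤ N ^ 2 := by
      exact_mod_cast (Nat.mul_le_mul (hA a ht.2.2) (hQ b ht.1)).trans_eq (sq N).symm
    have hmd : (m * d : ℤ) ≤ N ^ 2 := by
      exact_mod_cast (Nat.mul_le_mul hm (hD d ht.2.1)).trans_eq (sq N).symm
    have : (0 : ℤ) ≤ a * b := by positivity
    have : (0 : ℤ) ≤ m * d := by positivity
    exact mem_Icc.2 ⟨by simp only [r]; linarith, by simp only [r]; linarith⟩
  have hcard : (#(Icc (-(N ^ 2 : ℤ)) (N ^ 2)) : ℝ) = 2 * N ^ 2 + 1 := by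
    exact_mod_cast card_Icc_neg_natCast (N ^ 2)
  have hcs := norm_sq_sum_smul_comp_le hr u hf
  rw [hcard] at hcs
  convert hcs using 2
  · simp only [sum_product, r, u]
  · simp only [sum_product, r, u, linearCorrelation, sum_filter, mul_sum]
    refine sum_congr rfl fun b _ ↦ ?_
    rw [sum_congr rfl fun b' _ ↦ sum_congr rfl fun d _ ↦ sum_comm, sum_comm,
      sum_congr rfl fun d _ ↦ sum_comm]
    refine sum_congr rfl fun d _ ↦ sum_congr rfl fun a _ ↦ sum_congr rfl fun b' _ ↦
      sum_congr rfl fun d' _ ↦ sum_congr rfl fun a' _ ↦ ?_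
    have hiff : (a * b - a' * b' : ℤ) = m * (d - d') ↔ (a' * b' - m * d' : ℤ) = a * b - m * d :=
      ⟨fun h ↦ by linarith, fun h ↦ by linarith⟩
    simp only [hiff, mul_ite, mul_zero]
    congr 1
    ring

end Dispersion

section PrimeQuadruples

theorem sum_abs_sum_legSym_le {N : ℕ} {t : ℝ} (hN : N ≤ t ^ 24) {c : ℕ → ℝ}
    (hc : ∀ d, |c d| ≤ 1) :
    ∑ b ∈ N.primesLE, |∑ d ∈ N.primesLE, c d * legSym d b| ≤ 2 * t ^ 44 := by
  refine le_of_pow_le_pow_left₀ (n := 6) (by norm_num) (by positivity) ?_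
  calc (∑ b ∈ N.primesLE, |∑ d ∈ N.primesLE, c d * legSym d b|) ^ 6 ≤ 18 * (N : ℝ) ^ 11 :=
        pow_six_sum_abs_sum_legSym_le N hc
    _ ≤ 64 * (t ^ 24) ^ 11 := by
        gcongr
        norm_num
    _ = (2 * t ^ 44) ^ 6 := by ring

theorem dispersion_bound_le_sq {N t : ℝ} (ht : 1 ≤ t) (hN₀ : 0 ≤ N) (hN : N ≤ t ^ 24) :
    (2 * N ^ 2 + 1) * (N * (2 * t ^ 2) * ((2 * N + 1) * (2 * t ^ 44) + N ^ 2)) ≤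
      (7 * t ^ 71) ^ 2 := by
  have hN_sq : N ^ 2 ≤ t ^ 48 := (pow_le_pow_left₀ hN₀ hN 2).trans_eq (by ring)
  have ht₂₄ : 1 ≤ t ^ 24 := one_le_pow₀ ht
  have ht₄₈ : 1 ≤ t ^ 48 := one_le_pow₀ ht
  calc (2 * N ^ 2 + 1) * (N * (2 * t ^ 2) * ((2 * N + 1) * (2 * t ^ 44) + N ^ 2))
      ≤ (2 * t ^ 48 + t ^ 48) *
          (t ^ 24 * (2 * t ^ 2) * ((2 * t ^ 24 + t ^ 24) * (2 * t ^ 44) + t ^ 68)) := by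
        gcongr
        exact hN_sq.trans (pow_le_pow_right₀ ht (by norm_num))
    _ = 42 * t ^ 142 := by ring
    _ ≤ 49 * t ^ 142 := by
        gcongr
        norm_num
    _ = (7 * t ^ 71) ^ 2 := by ring

variable {E : Type*} [SeminormedAddCommGroup E] [NormedSpace ℝ E]

-- The bilinear sum saves `t ^ 4` over its trivial bound `t ^ 48`. Imposing `t ^ 22 ≤ b` leaves up
-- to `t ^ 2 + 1` solutions per difference, so about half of this saving survives in the square.
theorem norm_sum_smul_legSym_le_of_coprime {N m : ℕ} {t : ℝ} (ht : 1 ≤ t) (hN : N ≤ t ^ 24)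
    (hm : m ≤ N) {Q : Finset ℕ} (hQ : Q ⊆ N.primesLE) (hQm : ∀ b ∈ Q, b.Coprime m)
    (hQt : ∀ b ∈ Q, t ^ 22 ≤ b) {α : ℕ → ℝ} (hα : ∀ a, |α a| ≤ 1) {f : ℤ → E}
    (hf : ∀ n, ‖f n‖ ≤ 1) :
    ‖∑ b ∈ Q, ∑ d ∈ N.primesLE, ∑ a ∈ N.primesLE, (α a * legSym d b) • f (a * b - m * d)‖ ≤
      7 * t ^ 71 := by
  have hP : N.primesLE ⊆ Icc 1 N := by
    rw [Nat.primesLE_eq_filter_Icc_one]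
    exact filter_subset _ _
  have hle : ∀ a ∈ N.primesLE, a ≤ N := fun a ↦ Nat.le_of_mem_primesLE
  have hQ_coprime : (Q : Set ℕ).Pairwise Nat.Coprime := fun b hb b' hb' hbb' ↦
    (Nat.coprime_primes (Nat.prime_of_mem_primesLE (hQ hb))
      (Nat.prime_of_mem_primesLE (hQ hb'))).2 hbb'
  have hW : ∀ b ∈ Q, ((N / b : ℕ) : ℝ) + 1 ≤ 2 * t ^ 2 := by
    intro b hb
    have hdiv : (N : ℝ) / b ≤ t ^ 2 := by
      calc (N : ℝ) / b ≤ t ^ 24 / t ^ 22 := by gcongr; exact hQt b hb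
        _ = t ^ 2 := by field_simp
    linarith [one_le_pow₀ ht (n := 2), (Nat.cast_div_le : ((N / b : ℕ) : ℝ) ≤ N / b)]
  have hB : ∀ c : ℕ → ℝ, (∀ d, |c d| ≤ 1) →
      ∑ b ∈ Q, |∑ d ∈ N.primesLE, c d * legSym d b| ≤ 2 * t ^ 44 := fun c hc ↦
    (sum_le_sum_of_subset_of_nonneg hQ fun _ _ _ ↦ abs_nonneg _).trans
      (sum_abs_sum_legSym_le hN hc)
  have hcorr := sum_sum_mul_linearCorrelation_le (K := fun d b ↦ legSym d b) hP hP (hQ.trans hP)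
    hQ_coprime hQm hα (fun d b ↦ abs_legSym_le_one d b) hW (by positivity) hB
  refine le_of_sq_le_sq ?_ (by positivity)
  calc ‖∑ b ∈ Q, ∑ d ∈ N.primesLE, ∑ a ∈ N.primesLE,
        (α a * legSym d b) • f (a * b - m * d)‖ ^ 2
      ≤ (2 * (N : ℝ) ^ 2 + 1) * (N * (2 * t ^ 2) * ((2 * N + 1) * (2 * t ^ 44) + N ^ 2)) :=
        (norm_sq_sum_smul_mul_sub_mul_le hle hle (fun b hb ↦ hle b (hQ hb)) hm α
          (fun d b ↦ legSym d b) hf).trans (mul_le_mul_of_nonneg_left hcorr (by positivity))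
    _ ≤ (7 * t ^ 71) ^ 2 := dispersion_bound_le_sq ht N.cast_nonneg hN

theorem norm_sum_smul_legSym_le_card_mul_sq (N m : ℕ) (Q : Finset ℕ) {α : ℕ → ℝ}
    (hα : ∀ a, |α a| ≤ 1) {f : ℤ → E} (hf : ∀ n, ‖f n‖ ≤ 1) :
    ‖∑ b ∈ Q, ∑ d ∈ N.primesLE, ∑ a ∈ N.primesLE, (α a * legSym d b) • f (a * b - m * d)‖ ≤
      #Q * (N : ℝ) ^ 2 := by
  have hterm : ∀ a b d, ‖(α a * legSym d b) • f (a * b - m * d)‖ ≤ 1 := by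
    intro a b d
    rw [norm_smul, norm_mul]
    exact mul_le_one₀ (mul_le_one₀ (hα a) (norm_nonneg _) (abs_legSym_le_one d b))
      (norm_nonneg _) (hf _)
  calc _ ≤ ∑ _b ∈ Q, ∑ _d ∈ N.primesLE, ∑ _a ∈ N.primesLE, (1 : ℝ) :=
        norm_sum_le_of_le _ fun b _ ↦ norm_sum_le_of_le _ fun d _ ↦
          norm_sum_le_of_le _ fun a _ ↦ hterm a b d
    _ = #Q * (#N.primesLE : ℝ) ^ 2 := by
        simp only [sum_const, nsmul_eq_mul, mul_one]
        ring
    _ ≤ #Q * (N : ℝ) ^ 2 := by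
        have := card_primesLE_le N
        gcongr

theorem norm_sum_smul_legSym_le {N m : ℕ} {t : ℝ} (ht : 1 ≤ t) (hN : N ≤ t ^ 24)
    (hm : m ∈ N.primesLE) {α : ℕ → ℝ} (hα : ∀ a, |α a| ≤ 1) {f : ℤ → E} (hf : ∀ n, ‖f n‖ ≤ 1) :
    ‖∑ b ∈ N.primesLE, ∑ d ∈ N.primesLE, ∑ a ∈ N.primesLE,
      (α a * legSym d b) • f (a * b - m * d)‖ ≤ 9 * t ^ 71 := by
  set L : Finset ℕ := {b ∈ N.primesLE | t ^ 22 ≤ b ∧ b ≠ m}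
  set S : Finset ℕ := {b ∈ N.primesLE | ¬(t ^ 22 ≤ b ∧ b ≠ m)}
  have hL_coprime : ∀ b ∈ L, b.Coprime m := fun b hb ↦
    (Nat.coprime_primes (Nat.prime_of_mem_primesLE (mem_filter.1 hb).1)
      (Nat.prime_of_mem_primesLE hm)).2 (mem_filter.1 hb).2.2
  have hS_card : (#S : ℝ) ≤ 2 * t ^ 22 := by
    have hS : S ⊆ insert m (Icc 1 ⌊t ^ 22⌋₊) := by
      intro b hb
      obtain ⟨hbP, hb⟩ := mem_filter.1 hb
      rcases eq_or_ne b m with rfl | hbm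
      · exact mem_insert_self _ _
      · have hbt : (b : ℝ) ≤ t ^ 22 := le_of_not_ge fun h ↦ hb ⟨h, hbm⟩
        exact mem_insert_of_mem (mem_Icc.2
          ⟨(Nat.prime_of_mem_primesLE hbP).one_le, Nat.le_floor hbt⟩)
    calc (#S : ℝ) ≤ ⌊t ^ 22⌋₊ + 1 := by
          exact_mod_cast (card_le_card hS).trans ((card_insert_le _ _).trans (by simp))
      _ ≤ t ^ 22 + t ^ 22 := add_le_add (Nat.floor_le (by positivity)) (one_le_pow₀ ht)
      _ = 2 * t ^ 22 := by ring
  rw [← sum_filter_add_sum_filter_not N.primesLE fun b ↦ t ^ 22 ≤ b ∧ b ≠ m]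
  calc _ ≤ 7 * t ^ 71 + #S * (N : ℝ) ^ 2 := norm_add_le_of_le
        (norm_sum_smul_legSym_le_of_coprime ht hN (Nat.le_of_mem_primesLE hm) (filter_subset _ _)
          hL_coprime (fun b hb ↦ (mem_filter.1 hb).2.1) hα hf)
        (norm_sum_smul_legSym_le_card_mul_sq N m S hα hf)
    _ ≤ 7 * t ^ 71 + 2 * t ^ 22 * (t ^ 24) ^ 2 := by gcongr
    _ = 7 * t ^ 71 + 2 * t ^ 70 := by ring
    _ ≤ 7 * t ^ 71 + 2 * t ^ 71 := by
        gcongr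
        norm_num
    _ = 9 * t ^ 71 := by ring

end PrimeQuadruples

theorem prime_quadruple_sum_general {E : Type*} [SeminormedAddCommGroup E] [NormedSpace ℝ E]
    {x : ℝ} (hx : 1 ≤ x) {α : ℕ → ℕ → ℝ} (hα : ∀ a m, |α a m| ≤ 1) {f : ℤ → E}
    (hf : ∀ n, ‖f n‖ ≤ 1) :
    ‖∑ p₁ ∈ (Icc 1 ⌊x⌋₊).filter Nat.Prime, ∑ p₂ ∈ (Icc 1 ⌊x⌋₊).filter Nat.Prime,
      ∑ p₃ ∈ (Icc 1 ⌊x⌋₊).filter Nat.Prime, ∑ p₄ ∈ (Icc 1 ⌊x⌋₊).filter Nat.Prime,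
        (α p₁ p₃ * legSym p₄ p₂) • f (p₁ * p₂ - p₃ * p₄)‖ ≤ 9 * x ^ 4 * x ^ (-(1 / 24) : ℝ) := by
  simp only [← Nat.primesLE_eq_filter_Icc_one]
  set N := ⌊x⌋₊
  have hx₀ : 0 < x := zero_lt_one.trans_le hx
  set t : ℝ := x ^ (1 / 24 : ℝ)
  have ht : 1 ≤ t := Real.one_le_rpow hx (by norm_num)
  have htx : t ^ 24 = x := by
    rw [← Real.rpow_natCast, ← Real.rpow_mul hx₀.le]
    norm_num
  have hN : (N : ℝ) ≤ t ^ 24 := (Nat.floor_le hx₀.le).trans_eq htx.symm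
  have hreorder : ∀ F : ℕ → ℕ → ℕ → ℕ → E,
      ∑ p₁ ∈ N.primesLE, ∑ p₂ ∈ N.primesLE, ∑ p₃ ∈ N.primesLE, ∑ p₄ ∈ N.primesLE, F p₁ p₂ p₃ p₄ =
      ∑ p₃ ∈ N.primesLE, ∑ p₂ ∈ N.primesLE, ∑ p₄ ∈ N.primesLE, ∑ p₁ ∈ N.primesLE,
        F p₁ p₂ p₃ p₄ := by
    intro F
    rw [sum_comm, sum_congr rfl fun p₂ _ ↦ sum_comm, sum_comm]
    exact sum_congr rfl fun p₃ _ ↦ sum_congr rfl fun p₂ _ ↦ sum_comm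
  rw [hreorder]
  calc _ ≤ ∑ _p₃ ∈ N.primesLE, 9 * t ^ 71 := norm_sum_le_of_le _ fun p₃ hp₃ ↦
        norm_sum_smul_legSym_le ht hN hp₃ (fun p₁ ↦ hα p₁ p₃) hf
    _ = #N.primesLE * (9 * t ^ 71) := by rw [sum_const, nsmul_eq_mul]
    _ ≤ t ^ 24 * (9 * t ^ 71) := by
        gcongr
        exact (Nat.cast_le.2 (card_primesLE_le N)).trans hN
    _ = 9 * (t ^ 24) ^ 4 * t⁻¹ := by
        field_simp
    _ = 9 * x ^ 4 * x ^ (-(1 / 24) : ℝ) := by rw [htx, Real.rpow_neg hx₀.le]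

theorem rpow_neg_le_rpow_neg_of_rpow_le {p x s r : ℝ} (hp : 0 < p) (hr : 0 ≤ r) (h : p ^ s ≤ x) :
    x ^ (-r) ≤ p ^ (-(s * r)) := by
  calc x ^ (-r) ≤ (p ^ s) ^ (-r) :=
        Real.rpow_le_rpow_of_nonpos (Real.rpow_pos_of_pos hp s) h (neg_nonpos.2 hr)
    _ = p ^ (-(s * r)) := by rw [← Real.rpow_mul hp.le, mul_neg]

/-- The bound on the sum `W(x)` over quadruples of primes with Legendre symbol weights. -/
theorem prime_quadruple_sum (η : ℝ) (hη : 0 < η) :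
    ∃ κ : ℝ, 0 < κ ∧ ∃ C : ℝ, 0 < C ∧ ∀ (p : ℕ), p.Prime →
      ∀ (χ : MulChar (ZMod p) ℂ), χ ≠ 1 →
      ∀ (x : ℝ), (p : ℝ) ^ ((1 : ℝ) / 8 + η) ≤ x → x < (p : ℝ) →
      ‖∑ p₁ ∈ (Icc 1 ⌊x⌋₊).filter Nat.Prime, ∑ p₂ ∈ (Icc 1 ⌊x⌋₊).filter Nat.Prime,
        ∑ p₃ ∈ (Icc 1 ⌊x⌋₊).filter Nat.Prime, ∑ p₄ ∈ (Icc 1 ⌊x⌋₊).filter Nat.Prime,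
          ((legSym p₃ (p₁ : ℤ) : ℂ) * (legSym p₄ (p₂ : ℤ) : ℂ)) *
            χ (((p₁ : ℤ) * p₂ - (p₃ : ℤ) * p₄ : ℤ) : ZMod p)‖ ≤
        C * x ^ 4 * (p : ℝ) ^ (-κ) := by
  refine ⟨(1 / 8 + η) * (1 / 24), by positivity, 9, by norm_num, fun p hp χ _ x hpx _ ↦ ?_⟩
  have hp₁ : (1 : ℝ) ≤ p := by exact_mod_cast hp.one_le
  have hx : 1 ≤ x := (Real.one_le_rpow hp₁ (by positivity)).trans hpx
  have hbound := prime_quadruple_sum_general hx (α := fun p₁ p₃ ↦ legSym p₃ p₁)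
    (fun p₁ p₃ ↦ abs_legSym_le_one p₃ p₁) (f := fun n ↦ χ (n : ZMod p))
    fun n ↦ DirichletCharacter.norm_le_one χ _
  simp only [Complex.real_smul, Complex.ofReal_mul, Complex.ofReal_intCast] at hbound
  refine hbound.trans ?_
  gcongr
  exact rpow_neg_le_rpow_neg_of_rpow_le (zero_lt_one.trans_le hp₁) (by norm_num) hpx
end
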